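/- arXiv:2008.03204 — 11 statements merged into one kernel-verified Lean document; each statement's English description precedes it below -/
import Mathlib

section
/- Let 0 < H < 1/2, ζ > 0, p > 1, C > 0, and set χ := e^{−1/ζ}. Then for every t > 0, ∫₀ᵗ K(r)² dr = C² [ ζ^{−2p} (log(1/(t∧χ)))^{1−2p} · E_{2p}( 2H log(1/(t∧χ)) ) + (t^{2H} − (t∧χ)^{2H})/(2H) ]. -/
open MeasureTheory

/-- The exponential integral `E_b(x) = ∫₁^∞ e^{-x t} t^{-b} dt`. -/
noncomputable def expIntegralE (b x : ℝ) : ℝ :=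
  ∫ t in Set.Ioi (1 : ℝ), Real.exp (-x * t) * t ^ (-b)

/-- The log-modulated kernel `K(r) = C r^{H-1/2} max(ζ log(1/r), 1)^{-p}`. -/
noncomputable def logKernel (H ζ p C r : ℝ) : ℝ :=
  C * r ^ (H - 1/2) * (max (ζ * Real.log (1 / r)) 1) ^ (-p)


lemma logKernel_sq (H ζ p C r : ℝ) (hr : 0 < r) :
    (logKernel H ζ p C r) ^ 2
      = C ^ 2 * r ^ (2 * H - 1) * (max (ζ * Real.log (1 / r)) 1) ^ (-(2 * p)) := by
  have hM : 0 < max (ζ * Real.log (1 / r)) 1 := lt_max_of_lt_right one_pos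
  unfold logKernel
  rw [mul_pow, mul_pow, ← Real.rpow_mul_natCast hr.le, ← Real.rpow_mul_natCast hM.le]
  congr 2
  · congr 1; push_cast; ring
  · push_cast; ring

lemma logKernel_sq_integrable (H ζ p C t : ℝ) (hH0 : 0 < H) (hp : 1 < p) (ht : 0 < t) :
    IntervalIntegrable (fun r => (logKernel H ζ p C r) ^ 2) volume 0 t := by
  have h1 : IntervalIntegrable (fun r : ℝ => C ^ 2 * r ^ (2 * H - 1)) volume 0 t :=
    (intervalIntegral.intervalIntegrable_rpow' (by linarith)).const_mul _
  refine h1.mono_fun ?_ ?_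
  · apply Measurable.aestronglyMeasurable
    unfold logKernel
    fun_prop
  · rw [Set.uIoc_of_le ht.le]
    refine (ae_restrict_iff' measurableSet_Ioc).2 (Filter.Eventually.of_forall ?_)
    intro r hr
    have hM : 1 ≤ max (ζ * Real.log (1 / r)) 1 := le_max_right _ _
    have hr' := Real.rpow_pos_of_pos hr.1 (2 * H - 1)
    have h2 := Real.rpow_le_one_of_one_le_of_nonpos hM (show -(2 * p) ≤ 0 by linarith)
    have h3 := Real.rpow_nonneg (zero_le_one.trans hM) (-(2 * p))
    simp only [logKernel_sq H ζ p C r hr.1]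
    rw [Real.norm_of_nonneg (by positivity), Real.norm_of_nonneg (by positivity)]
    exact mul_le_of_le_one_right (by positivity) h2

lemma image_exp_Ioi (m L : ℝ) (hL : 0 < L) (hm : m = Real.exp (-L)) :
    Set.image (fun s : ℝ => Real.exp (-L * s)) (Set.Ioi 1) = Set.Ioo 0 m := by
  ext r
  constructor
  · rintro ⟨s, hs, rfl⟩
    refine ⟨Real.exp_pos _, ?_⟩
    rw [hm]
    apply Real.exp_lt_exp.2
    have : (1 : ℝ) < s := hs
    nlinarith
  · rintro ⟨h0, h1⟩
    refine ⟨-Real.log r / L, ?_, ?_⟩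
    · have : Real.log r < -L := by
        rw [hm] at h1
        simpa using Real.log_lt_log h0 h1
      show 1 < -Real.log r / L
      rw [lt_div_iff₀ hL]; linarith
    · show Real.exp (-L * (-Real.log r / L)) = r
      rw [show -L * (-Real.log r / L) = Real.log r by field_simp]
      exact Real.exp_log h0

lemma lower_part (H ζ p C m L : ℝ) (hζ : 0 < ζ) (hL : 0 < L)
    (hζL : 1 ≤ ζ * L) (hm : m = Real.exp (-L)) :
    ∫ r in (0 : ℝ)..m, (logKernel H ζ p C r) ^ 2
      = C ^ 2 * (ζ ^ (-(2 * p)) * L ^ (1 - 2 * p) * expIntegralE (2 * p) (2 * H * L)) := by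
  have hm0 : 0 < m := hm ▸ Real.exp_pos _
  rw [intervalIntegral.integral_of_le hm0.le, integral_Ioc_eq_integral_Ioo,
    ← image_exp_Ioi m L hL hm,
    integral_image_eq_integral_abs_deriv_smul (f' := fun s => Real.exp (-L * s) * (-L))
      measurableSet_Ioi]
  · unfold expIntegralE
    rw [← integral_const_mul, ← integral_const_mul]
    refine setIntegral_congr_fun measurableSet_Ioi ?_
    intro s hs
    have hs1 : (1 : ℝ) < s := hs
    have hs0 : 0 < s := by linarith
    simp only [smul_eq_mul]
    rw [logKernel_sq _ _ _ _ _ (Real.exp_pos _), abs_mul, abs_neg, abs_of_pos hL,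
      abs_of_pos (Real.exp_pos _), one_div, Real.log_inv, Real.log_exp,
      max_eq_left (by nlinarith), ← Real.exp_mul,
      show ζ * -(-L * s) = ζ * L * s by ring, Real.mul_rpow (by positivity) hs0.le,
      Real.mul_rpow hζ.le hL.le, show 1 - 2 * p = 1 + -(2 * p) by ring,
      Real.rpow_add hL, Real.rpow_one,
      show -(2 * H * L) * s = -L * s + -L * s * (2 * H - 1) by ring, Real.exp_add]
    ring
  · intro s _
    have := ((hasDerivAt_id s).const_mul (-L)).exp
    simpa using this.hasDerivWithinAt
  · intro a _ b _ hab
    have := Real.exp_injective hab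
    have hL' : -L ≠ 0 := neg_ne_zero.2 hL.ne'
    exact mul_left_cancel₀ hL' this

theorem variance_log_fbm (H ζ p C : ℝ) (hH0 : 0 < H) (hH : H < 1/2)
    (hζ : 0 < ζ) (hp : 1 < p) (hC : 0 < C) (χ : ℝ) (hχ : χ = Real.exp (-1/ζ)) :
    ∀ t : ℝ, 0 < t →
      ∫ r in (0 : ℝ)..t, (logKernel H ζ p C r) ^ 2
        = C ^ 2 * (ζ ^ (-(2 * p)) * (Real.log (1 / min t χ)) ^ (1 - 2 * p)
              * expIntegralE (2 * p) (2 * H * Real.log (1 / min t χ))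
            + (t ^ (2 * H) - (min t χ) ^ (2 * H)) / (2 * H)) := by
  intro t ht
  have hχ0 : 0 < χ := hχ ▸ Real.exp_pos _
  have hlχ : Real.log χ = -1 / ζ := by rw [hχ, Real.log_exp]
  have hm0 : 0 < min t χ := lt_min ht hχ0
  have hζL : 1 ≤ ζ * Real.log (1 / min t χ) := by
    have h := Real.log_le_log hm0 (min_le_right t χ)
    rw [hlχ] at h
    rw [one_div, Real.log_inv]
    calc (1 : ℝ) = ζ * -(-1 / ζ) := by field_simp
      _ ≤ _ := mul_le_mul_of_nonneg_left (by linarith) hζ.le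
  have hL : 0 < Real.log (1 / min t χ) := by
    by_contra h
    nlinarith
  have hlow := lower_part H ζ p C (min t χ) _ hζ hL hζL
    (by rw [one_div, Real.log_inv, neg_neg, Real.exp_log hm0])
  have hint := logKernel_sq_integrable H ζ p C t hH0 hp ht
  have hmt : min t χ ≤ t := min_le_left _ _
  have hmem : min t χ ∈ Set.uIcc 0 t := by
    rw [Set.uIcc_of_le ht.le]; exact ⟨hm0.le, hmt⟩
  have hi1 : IntervalIntegrable (fun r => (logKernel H ζ p C r) ^ 2) volume 0 (min t χ) :=
    hint.mono_set (Set.uIcc_subset_uIcc_left hmem)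
  have hi2 : IntervalIntegrable (fun r => (logKernel H ζ p C r) ^ 2) volume (min t χ) t :=
    hint.mono_set (Set.uIcc_subset_uIcc_right hmem)
  have hup : ∫ r in (min t χ)..t, (logKernel H ζ p C r) ^ 2
      = C ^ 2 * ((t ^ (2 * H) - (min t χ) ^ (2 * H)) / (2 * H)) := by
    rcases le_total t χ with h | h
    · simp [min_eq_left h]
    · rw [min_eq_right h]
      have hcongr : ∫ r in χ..t, (logKernel H ζ p C r) ^ 2
          = ∫ r in χ..t, C ^ 2 * r ^ (2 * H - 1) := by
        refine intervalIntegral.integral_congr ?_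
        intro r hr
        rw [Set.uIcc_of_le h] at hr
        have hr0 : 0 < r := hχ0.trans_le hr.1
        have hle : ζ * Real.log (1 / r) ≤ 1 := by
          have h' := Real.log_le_log hχ0 hr.1
          rw [hlχ] at h'
          rw [one_div, Real.log_inv]
          calc ζ * -Real.log r ≤ ζ * -(-1 / ζ) :=
                mul_le_mul_of_nonneg_left (by linarith) hζ.le
            _ = 1 := by field_simp
        simp only [logKernel_sq _ _ _ _ _ hr0]
        rw [max_eq_right hle, Real.one_rpow, mul_one]
      rw [hcongr, intervalIntegral.integral_const_mul, integral_rpow (Or.inl (by linarith))]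
      simp
  rw [← intervalIntegral.integral_add_adjacent_intervals hi1 hi2, hlow, hup]
  ring
end

section
/- Let H = 0, ζ > 0, p > 1, C > 0, and set χ := e^{−1/ζ}. Then for every t > 0, ∫₀ᵗ K(r)² dr = C² [ ζ^{−2p} (1/(2p−1)) (log(1/(t∧χ)))^{1−2p} + log( t/(t∧χ) ) ]. In particular K is square integrable on (0,t) even for H = 0. -/
open MeasureTheory

lemma logF_deriv (q r : ℝ) (hq : 1 < q) (h0 : 0 < r) (h1 : r < 1) :
    HasDerivAt (fun x : ℝ => (-Real.log x) ^ (1 - q) / (q - 1)) (r⁻¹ * (-Real.log r) ^ (-q)) r := by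
  have hl : 0 < -Real.log r := by have := Real.log_neg h0 h1; linarith
  have h := (((Real.hasDerivAt_log h0.ne').neg).rpow_const (p := 1 - q) (Or.inl hl.ne')).div_const (q - 1)
  refine h.congr_deriv ?_
  have e : 1 - q - 1 = -q := by ring
  have : q - 1 ≠ 0 := by linarith
  rw [e]
  simp only [Pi.neg_apply]
  field_simp
  ring

lemma logF_cont (q a : ℝ) (hq : 1 < q) (h1 : a < 1) :
    ContinuousOn (fun x : ℝ => (-Real.log x) ^ (1 - q) / (q - 1)) (Set.Icc 0 a) := by
  intro x hx
  rcases hx.1.eq_or_lt with h | h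
  · subst h
    have h2 : ContinuousWithinAt (fun x : ℝ => (-Real.log x) ^ (1 - q) / (q - 1)) (Set.Ioi 0) 0 := by
      unfold ContinuousWithinAt
      have e : (-Real.log 0) ^ (1 - q) / (q - 1) = 0 := by
        rw [Real.log_zero, neg_zero, Real.zero_rpow (by linarith), zero_div]
      simp only [e]
      have t1 : Filter.Tendsto (fun x : ℝ => -Real.log x) (nhdsWithin 0 (Set.Ioi 0)) Filter.atTop :=
        Filter.tendsto_neg_atBot_atTop.comp Real.tendsto_log_nhdsGT_zero
      have t2 := ((tendsto_rpow_neg_atTop (y := q - 1) (by linarith)).comp t1).div_const (q - 1)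
      simpa [Function.comp_def] using t2
    exact (continuousWithinAt_Ioi_iff_Ici.1 h2).mono Set.Icc_subset_Ici_self
  · exact (logF_deriv q x hq h (lt_of_le_of_lt hx.2 h1)).continuousAt.continuousWithinAt

lemma logF_int (q a : ℝ) (hq : 1 < q) (h0 : 0 < a) (h1 : a < 1) :
    IntervalIntegrable (fun r : ℝ => r⁻¹ * (-Real.log r) ^ (-q)) volume 0 a ∧
    ∫ r in (0:ℝ)..a, r⁻¹ * (-Real.log r) ^ (-q) = (-Real.log a) ^ (1 - q) / (q - 1) := by
  have hd : ∀ x ∈ Set.Ioo 0 a, HasDerivAt (fun x : ℝ => (-Real.log x) ^ (1 - q) / (q - 1))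
      (x⁻¹ * (-Real.log x) ^ (-q)) x :=
    fun x hx => logF_deriv q x hq hx.1 (hx.2.trans h1)
  have hc := logF_cont q a hq h1
  have hi : IntervalIntegrable (fun r : ℝ => r⁻¹ * (-Real.log r) ^ (-q)) volume 0 a := by
    rw [intervalIntegrable_iff_integrableOn_Ioc_of_le h0.le]
    refine intervalIntegral.integrableOn_deriv_of_nonneg hc hd ?_
    intro x hx
    have := Real.log_neg hx.1 (hx.2.trans h1)
    exact mul_nonneg (inv_nonneg.2 hx.1.le) (Real.rpow_nonneg (by linarith) _)
  refine ⟨hi, ?_⟩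
  rw [intervalIntegral.integral_eq_sub_of_hasDerivAt_of_le h0.le hc hd hi]
  rw [Real.log_zero, neg_zero, Real.zero_rpow (by linarith), zero_div, sub_zero]

lemma kernel_sq (ζ p C r : ℝ) (h0 : 0 < r) :
    (logKernel 0 ζ p C r) ^ 2 = C ^ 2 * r⁻¹ * (max (ζ * -Real.log r) 1) ^ (-(2 * p)) := by
  have hm : 0 ≤ max (ζ * -Real.log r) 1 := le_trans zero_le_one (le_max_right _ _)
  have e1 : (r ^ ((0:ℝ) - 1/2)) ^ 2 = r⁻¹ := by
    rw [← Real.rpow_natCast, ← Real.rpow_mul h0.le, ← Real.rpow_neg_one]; norm_num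
  have e2 : ((max (ζ * -Real.log r) 1) ^ (-p)) ^ 2 = (max (ζ * -Real.log r) 1) ^ (-(2 * p)) := by
    rw [← Real.rpow_natCast, ← Real.rpow_mul hm]; congr 1; push_cast; ring
  unfold logKernel
  rw [one_div r, Real.log_inv, mul_pow, mul_pow, e1, e2]

theorem variance_log_fbm_H_zero (ζ p C : ℝ)
    (hζ : 0 < ζ) (hp : 1 < p) (hC : 0 < C) (χ : ℝ) (hχ : χ = Real.exp (-1/ζ)) :
    ∀ t : ℝ, 0 < t →
      (∫ r in (0 : ℝ)..t, (logKernel 0 ζ p C r) ^ 2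
        = C ^ 2 * (ζ ^ (-(2 * p)) * (1 / (2 * p - 1))
              * (Real.log (1 / min t χ)) ^ (1 - 2 * p)
            + Real.log (t / min t χ)))
      ∧ IntervalIntegrable (fun r => (logKernel 0 ζ p C r) ^ 2) volume 0 t := by
  intro t ht
  have hχ0 : 0 < χ := hχ ▸ Real.exp_pos _
  have hlχ : Real.log χ = -1/ζ := by rw [hχ, Real.log_exp]
  have hχ1 : χ < 1 := by
    rw [hχ, Real.exp_lt_one_iff]
    exact div_neg_of_neg_of_pos (by norm_num) hζ
  have hz : ζ * -(-1/ζ) = 1 := by field_simp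
  obtain ⟨m, hm⟩ : ∃ m, m = min t χ := ⟨_, rfl⟩
  rw [← hm]
  have hm0 : 0 < m := hm ▸ lt_min ht hχ0
  have hmt : m ≤ t := hm ▸ min_le_left _ _
  have hmχ : m ≤ χ := hm ▸ min_le_right _ _
  obtain ⟨i1, v1⟩ := logF_int (2 * p) m (by linarith) hm0 (by linarith)
  have c1 : Set.EqOn (fun r : ℝ => C ^ 2 * ζ ^ (-(2 * p)) * (r⁻¹ * (-Real.log r) ^ (-(2 * p))))
      (fun r => (logKernel 0 ζ p C r) ^ 2) (Set.uIoc 0 m) := by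
    intro r hr
    rw [Set.uIoc_of_le hm0.le] at hr
    have hl : Real.log r ≤ -1/ζ := hlχ ▸ Real.log_le_log hr.1 (hr.2.trans hmχ)
    have h2 : 1 ≤ ζ * -Real.log r := by
      rw [← hz]; exact mul_le_mul_of_nonneg_left (by linarith) hζ.le
    have h3 : 0 ≤ -Real.log r := by
      have := Real.log_neg hr.1 (lt_of_le_of_lt (hr.2.trans hmχ) hχ1); linarith
    simp only [kernel_sq ζ p C r hr.1, max_eq_left h2]
    rw [Real.mul_rpow hζ.le h3]; ring
  have c2 : Set.EqOn (fun r : ℝ => C ^ 2 * r⁻¹)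
      (fun r => (logKernel 0 ζ p C r) ^ 2) (Set.uIoc m t) := by
    intro r hr
    rw [Set.uIoc_of_le hmt] at hr
    have hr0 := hm0.trans hr.1
    have hχr : χ ≤ r := by
      rcases min_choice t χ with h | h
      · rw [← hm] at h; exact absurd hr.2 (by rw [← h]; exact not_le.2 hr.1)
      · rw [← h, ← hm]; exact hr.1.le
    have hl : -1/ζ ≤ Real.log r := hlχ ▸ Real.log_le_log hχ0 hχr
    have h2 : ζ * -Real.log r ≤ 1 := by
      rw [← hz]; exact mul_le_mul_of_nonneg_left (by linarith) hζ.le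
    simp only [kernel_sq ζ p C r hr0, max_eq_right h2, Real.one_rpow, mul_one]
  have n0 : (0:ℝ) ∉ Set.uIcc m t := by
    rw [Set.uIcc_of_le hmt]; exact fun h => absurd h.1 (not_le.2 hm0)
  have i2 : IntervalIntegrable (fun r : ℝ => r⁻¹) volume m t := by
    refine intervalIntegral.intervalIntegrable_inv (fun x hx h => n0 (h ▸ hx)) continuousOn_id
  have j1 := (i1.const_mul (C ^ 2 * ζ ^ (-(2 * p)))).congr c1
  have j2 := (i2.const_mul (C ^ 2)).congr c2
  refine ⟨?_, j1.trans j2⟩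
  rw [← intervalIntegral.integral_add_adjacent_intervals j1 j2,
    ← intervalIntegral.integral_congr_ae (Filter.Eventually.of_forall c1), ← intervalIntegral.integral_congr_ae (Filter.Eventually.of_forall c2),
    intervalIntegral.integral_const_mul, intervalIntegral.integral_const_mul, v1,
    integral_inv n0, one_div m, Real.log_inv]
  ring
end

section
/- Let ζ > 0, p > 1, and set χ := e^{−1/ζ} (so χ < 1). Define the normalization constant C_{H,ζ,p} := [ (1/ζ) E_{2p}(2H/ζ) + (1 − χ^{2H})/(2H) ]^{−1/2} if 0 < H < 1/2, and C_{0,ζ,p} := [ 2p/((2p−1)ζ) ]^{−1/2} if H = 0. Then with C := C_{H,ζ,p} in the definition of the kernel K, one has ∫₀¹ K(r)² dr = 1, i.e. the log-modulated fractional Brownian motion has unit variance at time 1. -/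
open MeasureTheory

/-- The normalization constant `C_{H,ζ,p}` making the log-fBm have unit variance at time 1. -/
noncomputable def normConst (H ζ p : ℝ) : ℝ :=
  if H = 0 then (2 * p / ((2 * p - 1) * ζ)) ^ (-(1/2) : ℝ)
  else ((1/ζ) * expIntegralE (2 * p) (2 * H / ζ)
      + (1 - (Real.exp (-1/ζ)) ^ (2 * H)) / (2 * H)) ^ (-(1/2) : ℝ)

lemma aux_cov (g : ℝ → ℝ) (ζ : ℝ) (hζ : 0 < ζ) :
    ∫ r in (0 : ℝ)..1, g r =
      ∫ t in Set.Ioi (0 : ℝ), (Real.exp (-t / ζ) / ζ) * g (Real.exp (-t / ζ)) := by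
  have himg : (fun t : ℝ => Real.exp (-t / ζ)) '' Set.Ioi 0 = Set.Ioo 0 1 := by
    ext r
    constructor
    · rintro ⟨t, ht, rfl⟩
      have ht' : 0 < t := ht
      refine ⟨Real.exp_pos _, ?_⟩
      rw [Real.exp_lt_one_iff]
      exact div_neg_of_neg_of_pos (by linarith) hζ
    · rintro ⟨h0, h1⟩
      refine ⟨-(ζ * Real.log r), ?_, ?_⟩
      · have := Real.log_neg h0 h1
        show 0 < -(ζ * Real.log r)
        nlinarith
      · have : -(-(ζ * Real.log r)) / ζ = Real.log r := by field_simp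
        simp only [this]
        exact Real.exp_log h0
  rw [intervalIntegral.integral_of_le zero_le_one, integral_Ioc_eq_integral_Ioo, ← himg]
  rw [integral_image_eq_integral_abs_deriv_smul (f' := fun t => Real.exp (-t / ζ) * (-1 / ζ))
    measurableSet_Ioi]
  · refine setIntegral_congr_fun measurableSet_Ioi fun t _ => ?_
    have : |Real.exp (-t / ζ) * (-1 / ζ)| = Real.exp (-t / ζ) / ζ := by
      rw [abs_mul, abs_of_pos (Real.exp_pos _), abs_div, abs_neg, abs_one, abs_of_pos hζ]
      ring
    simp only [this, smul_eq_mul]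
  · intro t _
    exact (((hasDerivAt_id t).neg.div_const ζ).exp).hasDerivWithinAt
  · intro a _ b _ hab
    have h := Real.exp_injective hab
    field_simp at h
    linarith

lemma aux_pt (H ζ p C t : ℝ) (hζ : 0 < ζ) :
    (Real.exp (-t / ζ) / ζ) * (logKernel H ζ p C (Real.exp (-t / ζ))) ^ 2
      = C ^ 2 * ((1 / ζ) * (Real.exp (-(2 * H / ζ) * t) * (max t 1) ^ (-(2 * p)))) := by
  unfold logKernel
  have h1 : ζ * Real.log (1 / Real.exp (-t / ζ)) = t := by
    rw [one_div, Real.log_inv, Real.log_exp]; field_simp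
  have hm : (0 : ℝ) < max t 1 := lt_max_of_lt_right one_pos
  rw [h1, mul_pow, mul_pow]
  have h2 : ((max t 1) ^ (-p)) ^ 2 = (max t 1) ^ (-(2 * p)) := by
    rw [← Real.rpow_natCast, ← Real.rpow_mul hm.le]; congr 1; push_cast; ring
  have h3 : Real.exp (-t / ζ) * (Real.exp (-t / ζ) ^ (H - 1 / 2)) ^ 2
      = Real.exp (-(2 * H / ζ) * t) := by
    rw [← Real.exp_mul, ← Real.exp_nat_mul, ← Real.exp_add]
    congr 1; push_cast; field_simp; ring
  rw [h2, ← h3]; ring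

lemma aux_int (b x : ℝ) (hb : 1 < b) (hx : 0 ≤ x) :
    IntegrableOn (fun t : ℝ => Real.exp (-x * t) * t ^ (-b)) (Set.Ioi 1) := by
  refine Integrable.mono' (integrableOn_Ioi_rpow_of_lt (a := -b) (by linarith) one_pos) ?_ ?_
  · exact (by fun_prop : Measurable (fun t : ℝ => Real.exp (-x * t) * t ^ (-b))).aestronglyMeasurable
  · filter_upwards [ae_restrict_mem measurableSet_Ioi] with t ht
    have ht' : (0 : ℝ) < t := lt_trans one_pos ht
    have := Real.rpow_pos_of_pos ht' (-b)
    rw [Real.norm_of_nonneg (by positivity)]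
    refine mul_le_of_le_one_left this.le ?_
    rw [Real.exp_le_one_iff]
    nlinarith

lemma aux_split (b x : ℝ) (hb : 1 < b) (hx : 0 ≤ x) :
    ∫ t in Set.Ioi (0 : ℝ), Real.exp (-x * t) * (max t 1) ^ (-b)
      = (∫ t in (0 : ℝ)..1, Real.exp (-x * t)) + expIntegralE b x := by
  have e1 : Set.EqOn (fun t : ℝ => Real.exp (-x * t) * (max t 1) ^ (-b))
      (fun t => Real.exp (-x * t)) (Set.Ioc 0 1) := by
    intro t ht
    simp [max_eq_right ht.2]
  have e2 : Set.EqOn (fun t : ℝ => Real.exp (-x * t) * (max t 1) ^ (-b))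
      (fun t => Real.exp (-x * t) * t ^ (-b)) (Set.Ioi 1) := by
    intro t ht
    simp only [max_eq_left (le_of_lt (Set.mem_Ioi.1 ht))]
  have hc : Continuous fun t : ℝ => Real.exp (-x * t) := by fun_prop
  rw [← Set.Ioc_union_Ioi_eq_Ioi (zero_le_one (α := ℝ)),
    setIntegral_union (Set.Ioc_disjoint_Ioi le_rfl) measurableSet_Ioi
      ((integrableOn_congr_fun e1 measurableSet_Ioc).2
        (hc.integrableOn_Ioc))
      ((integrableOn_congr_fun e2 measurableSet_Ioi).2 (aux_int b x hb hx)),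
    setIntegral_congr_fun measurableSet_Ioc e1, setIntegral_congr_fun measurableSet_Ioi e2,
    intervalIntegral.integral_of_le zero_le_one, expIntegralE]

lemma aux_norm (S : ℝ) (hS : 0 < S) : (S ^ (-(1/2) : ℝ)) ^ 2 * S = 1 := by
  rw [← Real.rpow_natCast, ← Real.rpow_mul hS.le]
  have : (-(1/2) : ℝ) * ((2 : ℕ) : ℝ) = -1 := by norm_num
  rw [this, Real.rpow_neg_one, inv_mul_cancel₀ hS.ne']

theorem normalization_unit_variance (H ζ p : ℝ) (hH0 : 0 ≤ H) (hH : H < 1/2)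
    (hζ : 0 < ζ) (hp : 1 < p) :
    ∫ r in (0 : ℝ)..1, (logKernel H ζ p (normConst H ζ p) r) ^ 2 = 1 := by
  rw [aux_cov _ ζ hζ]
  simp only [aux_pt H ζ p _ _ hζ]
  rw [integral_const_mul, integral_const_mul,
    aux_split (2 * p) (2 * H / ζ) (by linarith) (by positivity)]
  by_cases h0 : H = 0
  · subst h0
    have hE : expIntegralE (2 * p) (2 * 0 / ζ) = 1 / (2 * p - 1) := by
      unfold expIntegralE
      simp only [mul_zero, zero_div, neg_zero, zero_mul, Real.exp_zero, one_mul]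
      rw [integral_Ioi_rpow_of_lt (by linarith) one_pos, Real.one_rpow]
      rw [neg_div, ← div_neg]; congr 1; ring
    have hq : 0 < 2 * p - 1 := by linarith
    have hS : 1 / ζ * ((∫ t in (0 : ℝ)..1, Real.exp (-(2 * 0 / ζ) * t))
        + expIntegralE (2 * p) (2 * 0 / ζ)) = 2 * p / ((2 * p - 1) * ζ) := by
      rw [hE]
      simp
      field_simp
      ring
    rw [hS, normConst, if_pos rfl]
    exact aux_norm _ (by positivity)
  · have hHp : 0 < H := lt_of_le_of_ne hH0 (Ne.symm h0)
    have hI : (∫ t in (0 : ℝ)..1, Real.exp (-(2 * H / ζ) * t))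
        = ζ * ((1 - (Real.exp (-1/ζ)) ^ (2 * H)) / (2 * H)) := by
      have hne : -(2 * H / ζ) ≠ 0 := neg_ne_zero.2 (by positivity)
      rw [intervalIntegral.integral_comp_mul_left (fun u => Real.exp u) hne, integral_exp,
        ← Real.exp_mul]
      have : -1 / ζ * (2 * H) = -(2 * H / ζ) := by ring
      rw [this]
      simp only [mul_zero, mul_one, Real.exp_zero, smul_eq_mul]
      generalize Real.exp (-(2 * H / ζ)) = y
      field_simp
      ring
    have hS : 1 / ζ * ((∫ t in (0 : ℝ)..1, Real.exp (-(2 * H / ζ) * t))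
        + expIntegralE (2 * p) (2 * H / ζ)) = (1/ζ) * expIntegralE (2 * p) (2 * H / ζ)
      + (1 - (Real.exp (-1/ζ)) ^ (2 * H)) / (2 * H) := by
      rw [hI, mul_add, ← mul_assoc, one_div_mul_cancel hζ.ne', one_mul, add_comm]
    rw [hS, normConst, if_neg h0]
    apply aux_norm
    have hE : 0 ≤ expIntegralE (2 * p) (2 * H / ζ) := by
      refine setIntegral_nonneg measurableSet_Ioi fun t ht => ?_
      have ht' : (0 : ℝ) < t := lt_trans one_pos ht
      positivity
    have h1 : (Real.exp (-1/ζ)) ^ (2 * H) < 1 := by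
      rw [← Real.exp_mul, Real.exp_lt_one_iff]
      exact mul_neg_of_neg_of_pos (div_neg_of_neg_of_pos (by norm_num) hζ) (by positivity)
    have h2 : 0 < (1 - (Real.exp (-1/ζ)) ^ (2 * H)) / (2 * H) :=
      div_pos (by linarith) (by positivity)
    positivity
end

section
/- Let 0 < H < 1/2, p > 1, ζ > 0 with ζ p ≤ 1/2 − H (a condition ensuring that the kernel K is nonincreasing), and C > 0. Then there exists a constant C' > 0, depending only on H, ζ, p, C, such that for all 0 ≤ s < t ≤ 1: ∫ₛᵗ K(t−r)² dr + ∫₀ˢ ( K(t−r) − K(s−r) )² dr ≤ C' (t−s)^{2H}. (By the Itô isometry the left-hand side equals E[|Ŵ_t − Ŵ_s|²] for the log-modulated fractional Brownian motion Ŵ.) -/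
open MeasureTheory

lemma logKernel_nonneg (H ζ p C r : ℝ) (hC : 0 < C) (hr : 0 ≤ r) :
    0 ≤ logKernel H ζ p C r := by
  unfold logKernel
  positivity

lemma logKernel_le (H ζ p C r : ℝ) (hp : 1 < p) (hC : 0 < C) (hr : 0 ≤ r) :
    logKernel H ζ p C r ≤ C * r ^ (H - 1/2) := by
  unfold logKernel
  have h1 : (max (ζ * Real.log (1 / r)) 1) ^ (-p) ≤ 1 :=
    Real.rpow_le_one_of_one_le_of_nonpos (le_max_right _ _) (by linarith)
  have h2 : 0 ≤ C * r ^ (H - 1/2) := by positivity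
  exact mul_le_of_le_one_right h2 h1

lemma logKernel_sq_le (H ζ p C r : ℝ) (hp : 1 < p) (hC : 0 < C) (hr : 0 < r) :
    logKernel H ζ p C r ^ 2 ≤ C ^ 2 * r ^ (2 * H - 1) := by
  have h := pow_le_pow_left₀ (logKernel_nonneg H ζ p C r hC hr.le)
    (logKernel_le H ζ p C r hp hC hr.le) 2
  refine h.trans (le_of_eq ?_)
  rw [mul_pow, ← Real.rpow_natCast (r ^ (H - 1/2)), ← Real.rpow_mul hr.le]
  congr 2
  push_cast
  ring

lemma logKernel_anti (H ζ p C x y : ℝ) (hp : 1 < p) (hζ : 0 < ζ)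
    (hζp : ζ * p ≤ 1/2 - H) (hC : 0 < C) (hx : 0 < x) (hxy : x ≤ y) :
    logKernel H ζ p C y ≤ logKernel H ζ p C x := by
  have hy : 0 < y := hx.trans_le hxy
  unfold logKernel
  simp only [one_div, Real.log_inv]
  set M := max (ζ * -Real.log x) 1 with hM
  set N := max (ζ * -Real.log y) 1 with hN
  have hM1 : 1 ≤ M := le_max_right _ _
  have hN1 : 1 ≤ N := le_max_right _ _
  have hd : 0 ≤ Real.log y - Real.log x := sub_nonneg.2 (Real.log_le_log hx hxy)
  have hzd : 0 ≤ ζ * (Real.log y - Real.log x) := by positivity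
  have hMN : M ≤ N * (1 + ζ * (Real.log y - Real.log x)) := by
    apply max_le
    · have : ζ * -Real.log y ≤ N := le_max_left _ _
      nlinarith
    · nlinarith
  have hlog : Real.log M ≤ Real.log N + ζ * (Real.log y - Real.log x) := by
    have h1 := Real.log_le_log (by linarith) hMN
    rw [Real.log_mul (by linarith) (by linarith)] at h1
    have h2 := Real.log_le_sub_one_of_pos
      (show 0 < 1 + ζ * (Real.log y - Real.log x) by linarith)
    linarith
  rw [mul_assoc, mul_assoc]
  apply mul_le_mul_of_nonneg_left _ hC.le
  rw [Real.rpow_def_of_pos hx, Real.rpow_def_of_pos hy,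
    Real.rpow_def_of_pos (show 0 < M by linarith),
    Real.rpow_def_of_pos (show 0 < N by linarith), ← Real.exp_add, ← Real.exp_add]
  apply Real.exp_le_exp.2
  have h3 := mul_le_mul_of_nonneg_left hlog (show 0 ≤ p by linarith)
  have h4 := mul_le_mul_of_nonneg_right hζp hd
  norm_num at h4 ⊢
  nlinarith

lemma logKernel_meas (H ζ p C : ℝ) : Measurable (logKernel H ζ p C) := by
  unfold logKernel
  fun_prop

lemma pow_intble (H C b : ℝ) (hH0 : 0 < H) :
    IntervalIntegrable (fun r : ℝ => C ^ 2 * r ^ (2 * H - 1)) volume 0 b :=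
  (intervalIntegral.intervalIntegrable_rpow' (by linarith)).const_mul _

lemma logKernel_sq_intble (H ζ p C b : ℝ) (hH0 : 0 < H) (hp : 1 < p) (hC : 0 < C)
    (hb : 0 ≤ b) :
    IntervalIntegrable (fun r => logKernel H ζ p C r ^ 2) volume 0 b := by
  refine (pow_intble H C b hH0).mono_fun'
    ((logKernel_meas H ζ p C).pow_const 2).aestronglyMeasurable ?_
  rw [Set.uIoc_of_le hb]
  filter_upwards [ae_restrict_mem measurableSet_Ioc] with r hr
  rw [Real.norm_of_nonneg (sq_nonneg _)]
  exact logKernel_sq_le H ζ p C r hp hC hr.1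

lemma logKernel_sq_int_le (H ζ p C b : ℝ) (hH0 : 0 < H) (hp : 1 < p) (hC : 0 < C)
    (hb : 0 ≤ b) :
    ∫ r in (0 : ℝ)..b, logKernel H ζ p C r ^ 2 ≤ C ^ 2 / (2 * H) * b ^ (2 * H) := by
  have h := intervalIntegral.integral_mono_on_of_le_Ioo hb
    (logKernel_sq_intble H ζ p C b hH0 hp hC hb) (pow_intble H C b hH0)
    (fun r hr => logKernel_sq_le H ζ p C r hp hC hr.1)
  refine h.trans (le_of_eq ?_)
  rw [intervalIntegral.integral_const_mul, integral_rpow (Or.inl (by linarith))]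
  rw [sub_add_cancel, Real.zero_rpow (by linarith)]
  ring

theorem incremental_variance_bound (H ζ p C : ℝ) (hH0 : 0 < H) (hH : H < 1/2)
    (hp : 1 < p) (hζ : 0 < ζ) (hζp : ζ * p ≤ 1/2 - H) (hC : 0 < C) :
    ∃ C' : ℝ, 0 < C' ∧ ∀ s t : ℝ, 0 ≤ s → s < t → t ≤ 1 →
      (∫ r in s..t, (logKernel H ζ p C (t - r)) ^ 2)
        + ∫ r in (0 : ℝ)..s, (logKernel H ζ p C (t - r) - logKernel H ζ p C (s - r)) ^ 2
      ≤ C' * (t - s) ^ (2 * H) := by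
  refine ⟨2 * (C ^ 2 / (2 * H)), by positivity, ?_⟩
  intro s t hs hst _
  have ht : 0 ≤ t := hs.trans hst.le
  set f : ℝ → ℝ := fun r => logKernel H ζ p C r ^ 2 with hf
  have hI : ∀ b, 0 ≤ b → IntervalIntegrable f volume 0 b := fun b hb =>
    logKernel_sq_intble H ζ p C b hH0 hp hC hb
  have hIab : ∀ a b, 0 ≤ a → 0 ≤ b → IntervalIntegrable f volume a b := fun a b ha hb =>
    (hI a ha).symm.trans (hI b hb)
  have hfs : IntervalIntegrable (fun r => f (s - r)) volume 0 s := by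
    have := (hI s hs).comp_sub_left s
    simpa using this.symm
  have hft : IntervalIntegrable (fun r => f (t - r)) volume 0 s := by
    have := (hIab t (t - s) ht (by linarith)).comp_sub_left t
    simpa using this
  have e1 : ∫ r in s..t, f (t - r) = ∫ r in (0 : ℝ)..(t - s), f r := by
    rw [intervalIntegral.integral_comp_sub_left f t, sub_self]
  have e2 : ∫ r in (0 : ℝ)..s, f (t - r) = ∫ r in (t - s)..t, f r := by
    rw [intervalIntegral.integral_comp_sub_left f t, sub_zero]
  have e3 : ∫ r in (0 : ℝ)..s, f (s - r) = ∫ r in (0 : ℝ)..s, f r := by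
    rw [intervalIntegral.integral_comp_sub_left f s, sub_zero, sub_self]
  have key : ∀ r < s, (logKernel H ζ p C (t - r) - logKernel H ζ p C (s - r)) ^ 2
      ≤ f (s - r) - f (t - r) := by
    intro r hr
    have h1 := logKernel_anti H ζ p C (s - r) (t - r) hp hζ hζp hC (by linarith) (by linarith)
    have h2 := logKernel_nonneg H ζ p C (t - r) hC (by linarith)
    simp only [hf]
    nlinarith
  have hm := logKernel_meas H ζ p C
  have hD : IntervalIntegrable
      (fun r => (logKernel H ζ p C (t - r) - logKernel H ζ p C (s - r)) ^ 2) volume 0 s := by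
    refine (hfs.sub hft).mono_fun' (Measurable.aestronglyMeasurable (by fun_prop)) ?_
    rw [Set.uIoc_of_le hs, ← Measure.restrict_congr_set Ioo_ae_eq_Ioc]
    filter_upwards [ae_restrict_mem measurableSet_Ioo] with r hr
    rw [Real.norm_of_nonneg (sq_nonneg _)]
    exact key r hr.2
  have h2 := intervalIntegral.integral_mono_on_of_le_Ioo hs hD (hfs.sub hft)
    (fun r hr => key r hr.2)
  rw [intervalIntegral.integral_sub hfs hft, e2, e3] at h2
  have a1 := intervalIntegral.integral_add_adjacent_intervals
    (hI (t - s) (by linarith)) (hIab (t - s) t (by linarith) ht)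
  have a2 := intervalIntegral.integral_add_adjacent_intervals (hI s hs) (hIab s t hs ht)
  have a3 : 0 ≤ ∫ r in s..t, f r :=
    intervalIntegral.integral_nonneg hst.le (fun r _ => sq_nonneg _)
  have a4 := logKernel_sq_int_le H ζ p C (t - s) hH0 hp hC (by linarith)
  change (∫ r in s..t, f (t - r)) + _ ≤ _
  rw [e1]
  change (∫ r in (0 : ℝ)..(t - s), f r) ≤ _ at a4
  linarith
end

section
/- Let H ∈ [0,1/2), ζ > 0, p > 1, C > 0, χ := e^{−1/ζ}. Let 0 ≤ u < t < 1 and set v := (u ∨ χ) ∧ t. Then ∫ᵤᵗ K(r) dr = C ζ^{−p} [ (log(1/v))^{1−p} E_p( (H+1/2) log(1/v) ) − 𝟙_{u>0} (log(1/u))^{1−p} E_p( (H+1/2) log(1/u) ) ] + C ( t^{H+1/2} − v^{H+1/2} )/( H+1/2 ). (Up to the factor ρ, with u := t − t∧s, this equals the covariance of Ŵ_t with a ρ-correlated Brownian motion B_s.) -/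
open MeasureTheory

theorem aux_kernel_int (a p x : ℝ) (ha : 0 < a) (hp : 1 < p) (hx0 : 0 < x) (hx1 : x < 1) :
    IntervalIntegrable (fun r : ℝ => r ^ (a - 1) * (Real.log (1 / r)) ^ (-p)) volume 0 x ∧
    ∫ r in (0 : ℝ)..x, r ^ (a - 1) * (Real.log (1 / r)) ^ (-p)
      = (Real.log (1 / x)) ^ (1 - p) * expIntegralE p (a * Real.log (1 / x)) := by
  set L := Real.log (1 / x) with hL
  have hLx : Real.log x = -L := by rw [hL, one_div, Real.log_inv]; ring
  have hLpos : 0 < L := by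
    have := Real.log_neg hx0 hx1
    linarith
  have hder : ∀ t ∈ Set.Ioi (1 : ℝ), HasDerivWithinAt (fun t : ℝ => Real.exp (-L * t))
      (Real.exp (-L * t) * (-L)) (Set.Ioi 1) t := by
    intro t _
    have h1 : HasDerivAt (fun t : ℝ => -L * t) (-L) t := by
      simpa using (hasDerivAt_id t).const_mul (-L)
    exact h1.exp.hasDerivWithinAt
  have hinj : Set.InjOn (fun t : ℝ => Real.exp (-L * t)) (Set.Ioi 1) := by
    intro s _ t _ h
    have h2 := Real.exp_injective h
    exact mul_left_cancel₀ (neg_ne_zero.mpr hLpos.ne') h2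
  have himg : Set.image (fun t : ℝ => Real.exp (-L * t)) (Set.Ioi 1) = Set.Ioo 0 x := by
    ext y
    constructor
    · rintro ⟨t, ht, rfl⟩
      refine ⟨Real.exp_pos _, ?_⟩
      rw [← Real.lt_log_iff_exp_lt hx0, hLx]
      have : (1 : ℝ) < t := ht
      nlinarith
    · rintro ⟨hy0, hyx⟩
      have h3 := Real.log_lt_log hy0 hyx
      rw [hLx] at h3
      refine ⟨-Real.log y / L, ?_, ?_⟩
      · show 1 < -Real.log y / L
        rw [lt_div_iff₀ hLpos]
        linarith
      · show Real.exp (-L * (-Real.log y / L)) = y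
        have : -L * (-Real.log y / L) = Real.log y := by field_simp
        rw [this, Real.exp_log hy0]
  have hcong : ∀ t ∈ Set.Ioi (1 : ℝ), |Real.exp (-L * t) * (-L)| •
      ((Real.exp (-L * t)) ^ (a - 1) * (Real.log (1 / Real.exp (-L * t))) ^ (-p))
      = L ^ (1 - p) * (Real.exp (-(a * L) * t) * t ^ (-p)) := by
    intro t ht
    have ht1 : (0 : ℝ) < t := lt_trans one_pos ht
    have e1 : |Real.exp (-L * t) * (-L)| = Real.exp (-L * t) * L := by
      rw [abs_mul, abs_neg, abs_of_pos hLpos, abs_of_pos (Real.exp_pos _)]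
    have e2 : Real.log (1 / Real.exp (-L * t)) = L * t := by
      rw [one_div, Real.log_inv, Real.log_exp]; ring
    have e3 : (L * t) ^ (-p) = L ^ (-p) * t ^ (-p) := Real.mul_rpow hLpos.le ht1.le
    have e4 : L ^ (1 - p) = L * L ^ (-p) := by
      rw [sub_eq_add_neg, Real.rpow_add hLpos, Real.rpow_one]
    have e5 : Real.exp (-(a * L) * t) = Real.exp (-L * t) * (Real.exp (-L * t)) ^ (a - 1) := by
      rw [← Real.exp_mul, ← Real.exp_add]; congr 1; ring
    rw [e1, e2, e3, e4, e5, smul_eq_mul]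
    ring
  have hint : IntegrableOn (fun t : ℝ => Real.exp (-(a * L) * t) * t ^ (-p)) (Set.Ioi 1) := by
    have hb : IntegrableOn (fun t : ℝ => t ^ (-p)) (Set.Ioi 1) :=
      integrableOn_Ioi_rpow_of_lt (by linarith) one_pos
    refine Integrable.mono' hb ?_ ?_
    · apply Measurable.aestronglyMeasurable
      fun_prop
    · refine (ae_restrict_iff' measurableSet_Ioi).mpr (Filter.Eventually.of_forall ?_)
      intro t ht
      have ht1 : (0 : ℝ) < t := lt_trans one_pos ht
      have hq : 0 ≤ t ^ (-p) := Real.rpow_nonneg ht1.le _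
      rw [Real.norm_of_nonneg (mul_nonneg (Real.exp_pos _).le hq)]
      have : Real.exp (-(a * L) * t) ≤ 1 := by
        apply Real.exp_le_one_iff.mpr
        have := mul_pos (mul_pos ha hLpos) ht1
        linarith
      nlinarith
  constructor
  · rw [intervalIntegrable_iff_integrableOn_Ioo_of_le hx0.le, ← himg,
      integrableOn_image_iff_integrableOn_abs_deriv_smul measurableSet_Ioi hder hinj]
    exact (integrableOn_congr_fun hcong measurableSet_Ioi).mpr (hint.const_mul _)
  · rw [intervalIntegral.integral_of_le hx0.le, integral_Ioc_eq_integral_Ioo, ← himg,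
      integral_image_eq_integral_abs_deriv_smul measurableSet_Ioi hder hinj,
      setIntegral_congr_fun measurableSet_Ioi hcong, integral_const_mul]
    rfl

theorem integrated_kernel_formula (H ζ p C : ℝ) (hH0 : 0 ≤ H) (hH : H < 1/2)
    (hζ : 0 < ζ) (hp : 1 < p) (hC : 0 < C) (χ : ℝ) (hχ : χ = Real.exp (-1/ζ))
    (u t : ℝ) (hu : 0 ≤ u) (hut : u < t) (ht : t < 1)
    (v : ℝ) (hv : v = min (max u χ) t) :
    ∫ r in u..t, logKernel H ζ p C r
      = C * ζ ^ (-p) *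
          ((Real.log (1 / v)) ^ (1 - p) * expIntegralE p ((H + 1/2) * Real.log (1 / v))
            - (if 0 < u then
                (Real.log (1 / u)) ^ (1 - p) * expIntegralE p ((H + 1/2) * Real.log (1 / u))
              else 0))
        + C * (t ^ (H + 1/2) - v ^ (H + 1/2)) / (H + 1/2) := by
  have ha : 0 < H + 1/2 := by linarith
  have hχ0 : 0 < χ := hχ ▸ Real.exp_pos _
  have hlogχ : Real.log χ = -1/ζ := by rw [hχ, Real.log_exp]
  have ht0 : 0 < t := lt_of_le_of_lt hu hut
  have hv0 : 0 < v := hv ▸ lt_min (lt_max_of_lt_right hχ0) ht0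
  have huv : u ≤ v := hv ▸ le_min (le_max_left _ _) hut.le
  have hvt : v ≤ t := hv ▸ min_le_right _ _
  have hv1 : v < 1 := lt_of_le_of_lt hvt ht
  have hu1 : u < 1 := hut.trans ht
  set a := H + 1/2 with hadef
  have haH : H - 1/2 = a - 1 := by rw [hadef]; ring
  have c1 : ∀ r ∈ Set.Ioo u v, logKernel H ζ p C r
      = C * ζ ^ (-p) * (r ^ (a - 1) * (Real.log (1 / r)) ^ (-p)) := by
    rintro r ⟨h1, h2⟩
    have hr0 : 0 < r := lt_of_le_of_lt hu h1
    have hrχ : r < χ := by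
      have : r < max u χ := lt_of_lt_of_le h2 (hv ▸ min_le_left _ _)
      rcases lt_max_iff.mp this with h | h
      · exact absurd h (not_lt.mpr h1.le)
      · exact h
    have hl := Real.log_lt_log hr0 hrχ
    have hl2 : 1 / ζ < Real.log (1 / r) := by
      rw [one_div r, Real.log_inv]
      rw [hlogχ, neg_div] at hl
      linarith
    have hl3 : 1 ≤ ζ * Real.log (1 / r) := by
      rw [div_lt_iff₀ hζ] at hl2
      linarith
    have hl0 : 0 ≤ Real.log (1 / r) := (lt_trans (by positivity) hl2).le
    unfold logKernel
    rw [max_eq_left hl3, Real.mul_rpow hζ.le hl0, haH]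
    ring
  have c2 : ∀ r ∈ Set.Ioo v t, logKernel H ζ p C r = C * r ^ (a - 1) := by
    rintro r ⟨h1, h2⟩
    have hr0 : 0 < r := hv0.trans h1
    have hrχ : χ ≤ r := by
      have h3 : min (max u χ) t < r := hv ▸ h1
      rcases min_lt_iff.mp h3 with h | h
      · exact ((le_max_right _ _).trans_lt h).le
      · exact absurd h (not_lt.mpr h2.le)
    have hl := Real.log_le_log hχ0 hrχ
    have hl2 : Real.log (1 / r) ≤ 1 / ζ := by
      rw [one_div r, Real.log_inv]
      rw [hlogχ, neg_div] at hl
      linarith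
    have hl3 : ζ * Real.log (1 / r) ≤ 1 := by
      rw [le_div_iff₀ hζ] at hl2
      linarith
    unfold logKernel
    rw [max_eq_right hl3, Real.one_rpow, haH]
    ring
  obtain ⟨iv, ev⟩ := aux_kernel_int a p v ha hp hv0 hv1
  have hU : IntervalIntegrable (fun r : ℝ => r ^ (a - 1) * (Real.log (1 / r)) ^ (-p)) volume 0 u ∧
      ∫ r in (0 : ℝ)..u, r ^ (a - 1) * (Real.log (1 / r)) ^ (-p)
      = if 0 < u then (Real.log (1 / u)) ^ (1 - p) * expIntegralE p (a * Real.log (1 / u))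
        else 0 := by
    by_cases h : 0 < u
    · rw [if_pos h]
      exact aux_kernel_int a p u ha hp h hu1
    · have h0 : u = 0 := le_antisymm (not_lt.mp h) hu
      rw [if_neg h, h0]
      simp
  obtain ⟨iu, eu⟩ := hU
  have iuv := (iu.symm.trans iv).const_mul (C * ζ ^ (-p))
  have ivt : IntervalIntegrable (fun r : ℝ => C * r ^ (a - 1)) volume v t :=
    (intervalIntegral.intervalIntegrable_rpow' (by linarith)).const_mul C
  have k1 : IntervalIntegrable (logKernel H ζ p C) volume u v := by
    rw [intervalIntegrable_iff_integrableOn_Ioo_of_le huv] at iuv ⊢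
    exact (integrableOn_congr_fun c1 measurableSet_Ioo).mpr iuv
  have k2 : IntervalIntegrable (logKernel H ζ p C) volume v t := by
    rw [intervalIntegrable_iff_integrableOn_Ioo_of_le hvt] at ivt ⊢
    exact (integrableOn_congr_fun c2 measurableSet_Ioo).mpr ivt
  have j1 : ∫ r in u..v, logKernel H ζ p C r
      = ∫ r in u..v, C * ζ ^ (-p) * (r ^ (a - 1) * (Real.log (1 / r)) ^ (-p)) := by
    rw [intervalIntegral.integral_of_le huv, intervalIntegral.integral_of_le huv,
      integral_Ioc_eq_integral_Ioo, integral_Ioc_eq_integral_Ioo]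
    exact setIntegral_congr_fun measurableSet_Ioo c1
  have j2 : ∫ r in v..t, logKernel H ζ p C r = ∫ r in v..t, C * r ^ (a - 1) := by
    rw [intervalIntegral.integral_of_le hvt, intervalIntegral.integral_of_le hvt,
      integral_Ioc_eq_integral_Ioo, integral_Ioc_eq_integral_Ioo]
    exact setIntegral_congr_fun measurableSet_Ioo c2
  have j3 := intervalIntegral.integral_interval_sub_left iv iu
  rw [← intervalIntegral.integral_add_adjacent_intervals k1 k2, j1, j2,
    intervalIntegral.integral_const_mul, intervalIntegral.integral_const_mul,
    integral_rpow (Or.inl (by linarith)), ← j3, ev, eu, sub_add_cancel]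
  ring
end

section
/- Let H ∈ [0,1/2), ζ > 0, p > 1, C > 0, χ := e^{−1/ζ}, and 0 < T < 1. Then ∫₀ᵀ ∫₀ˢ K(s−r) dr ds = I₁(T∧χ) + 𝟙_{T>χ} ( I₂(T,χ) + I₃(T,χ) ), where I₁(x) := C ζ^{−p} (log(1/x))^{1−p} [ x · E_p((H+1/2) log(1/x)) − E_p((H+3/2) log(1/x)) ], I₂(T,χ) := (C/(H+1/2)) [ (T^{H+3/2} − χ^{H+3/2})/(H+3/2) − (T−χ) χ^{H+1/2} ], and I₃(T,χ) := C ζ^{−p} (T−χ) (log(1/χ))^{1−p} E_p( (H+1/2) log(1/χ) ). -/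
open MeasureTheory

/-- `I₁(x)` in Lemma 5.2. -/
noncomputable def I₁ (H ζ p C x : ℝ) : ℝ :=
  C * ζ ^ (-p) * (Real.log (1 / x)) ^ (1 - p) *
    (x * expIntegralE p ((H + 1/2) * Real.log (1 / x))
      - expIntegralE p ((H + 3/2) * Real.log (1 / x)))

/-- `I₂(T, χ)` in Lemma 5.2. -/
noncomputable def I₂ (H C T χ : ℝ) : ℝ :=
  C / (H + 1/2) * ((T ^ (H + 3/2) - χ ^ (H + 3/2)) / (H + 3/2) - (T - χ) * χ ^ (H + 1/2))

/-- `I₃(T, χ)` in Lemma 5.2. -/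
noncomputable def I₃ (H ζ p C T χ : ℝ) : ℝ :=
  C * ζ ^ (-p) * (T - χ) * (Real.log (1 / χ)) ^ (1 - p) *
    expIntegralE p ((H + 1/2) * Real.log (1 / χ))

theorem aux_subst (a p x : ℝ) (hx0 : 0 < x) (hx1 : x < 1) :
    ∫ u in (0 : ℝ)..x, u ^ (a - 1) * (Real.log (1 / u)) ^ (-p)
      = (Real.log (1 / x)) ^ (1 - p) * expIntegralE p (a * Real.log (1 / x)) := by
  have hL : 0 < Real.log (1 / x) := Real.log_pos (by rw [lt_div_iff₀ hx0]; linarith)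
  have hxL : x = Real.exp (-Real.log (1 / x)) := by
    rw [one_div, Real.log_inv, neg_neg, Real.exp_log hx0]
  generalize Real.log (1 / x) = L at hL hxL
  have himg : (fun t : ℝ => Real.exp (-L * t)) '' Set.Ioi 1 = Set.Ioo 0 x := by
    ext u
    simp only [Set.mem_image, Set.mem_Ioi, Set.mem_Ioo]
    constructor
    · rintro ⟨t, ht, rfl⟩
      refine ⟨Real.exp_pos _, ?_⟩
      rw [hxL]
      apply Real.exp_lt_exp.mpr
      nlinarith
    · rintro ⟨hu0, hu1⟩
      have h1 : Real.log u < -L := by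
        rw [Real.log_lt_iff_lt_exp hu0, ← hxL]
        exact hu1
      refine ⟨-Real.log u / L, ?_, ?_⟩
      · rw [lt_div_iff₀ hL]; linarith
      · rw [show -L * (-Real.log u / L) = Real.log u by field_simp, Real.exp_log hu0]
  rw [intervalIntegral.integral_of_le hx0.le, integral_Ioc_eq_integral_Ioo, ← himg]
  have hd : ∀ t ∈ Set.Ioi (1 : ℝ), HasDerivWithinAt (fun t : ℝ => Real.exp (-L * t))
      (Real.exp (-L * t) * (-L)) (Set.Ioi 1) t := by
    intro t _
    have h := ((hasDerivAt_id t).const_mul (-L)).exp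
    simp only [id, mul_one] at h
    exact h.hasDerivWithinAt
  have hinj : Set.InjOn (fun t : ℝ => Real.exp (-L * t)) (Set.Ioi 1) := by
    intro s _ t _ hst
    have := Real.exp_injective hst
    exact mul_left_cancel₀ (neg_ne_zero.mpr hL.ne') this
  rw [integral_image_eq_integral_abs_deriv_smul measurableSet_Ioi hd hinj]
  unfold expIntegralE
  rw [← integral_const_mul]
  apply setIntegral_congr_fun measurableSet_Ioi
  intro t ht
  have ht0 : 0 < t := lt_trans one_pos ht
  simp only [smul_eq_mul]
  rw [one_div, Real.log_inv, Real.log_exp, abs_mul, abs_of_pos (Real.exp_pos _), abs_neg,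
    abs_of_pos hL, ← Real.exp_mul, show -(-L * t) = L * t by ring,
    Real.mul_rpow hL.le ht0.le, show 1 - p = 1 + -p by ring, Real.rpow_add hL, Real.rpow_one]
  have : Real.exp (-(a * L) * t) = Real.exp (-L * t) * Real.exp (-L * t * (a - 1)) := by
    rw [← Real.exp_add]; congr 1; ring
  rw [this]; ring

theorem aux_cont (H ζ p C : ℝ) : ContinuousOn (logKernel H ζ p C) (Set.Ioi 0) := by
  unfold logKernel
  intro r hr
  have hr0 : r ≠ 0 := ne_of_gt hr
  apply ContinuousAt.continuousWithinAt
  have h1 : ContinuousAt (fun r : ℝ => r ^ (H - 1/2)) r :=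
    Real.continuousAt_rpow_const _ _ (Or.inl hr0)
  have h2 : ContinuousAt (fun r : ℝ => max (ζ * Real.log (1 / r)) 1) r := by
    refine Filter.Tendsto.max ?_ continuousAt_const
    refine ContinuousAt.mul continuousAt_const ?_
    exact ContinuousAt.log (continuousAt_const.div continuousAt_id hr0) (one_div_ne_zero hr0)
  refine (continuousAt_const.mul h1).mul (h2.rpow_const (Or.inl ?_))
  exact (lt_of_lt_of_le one_pos (le_max_right _ _)).ne'

theorem aux_int_s6 (H ζ p C : ℝ) (hH0 : 0 ≤ H) (hp : 1 < p) (hC : 0 < C) (a b : ℝ)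
    (ha : 0 ≤ a) (hb : 0 ≤ b) : IntervalIntegrable (logKernel H ζ p C) volume a b := by
  have hsub : Set.uIoc a b ⊆ Set.Ioi 0 := by
    intro y hy
    exact lt_of_le_of_lt (le_min ha hb) hy.1
  have hg : IntervalIntegrable (fun x : ℝ => C * x ^ (H - 1/2)) volume a b :=
    (intervalIntegral.intervalIntegrable_rpow' (by linarith)).const_mul C
  refine hg.mono_fun' (((aux_cont H ζ p C).mono hsub).aestronglyMeasurable
    measurableSet_uIoc) ?_
  refine (ae_restrict_iff' measurableSet_uIoc).mpr (Filter.Eventually.of_forall ?_)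
  intro y hy
  have hy0 : 0 < y := hsub hy
  have hpos : 0 < C * y ^ (H - 1/2) := by positivity
  have hm : (1 : ℝ) ≤ max (ζ * Real.log (1 / y)) 1 := le_max_right _ _
  have h1 : (max (ζ * Real.log (1 / y)) 1) ^ (-p) ≤ 1 :=
    Real.rpow_le_one_of_one_le_of_nonpos hm (by linarith)
  have h0 : 0 ≤ (max (ζ * Real.log (1 / y)) 1) ^ (-p) :=
    Real.rpow_nonneg (by linarith) _
  simp only [logKernel]
  rw [Real.norm_of_nonneg (mul_nonneg hpos.le h0)]
  exact mul_le_of_le_one_right hpos.le h1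

theorem aux_parts (H ζ p C : ℝ) (hH0 : 0 ≤ H) (hp : 1 < p) (hC : 0 < C) (T : ℝ) (hT : 0 < T) :
    ∫ s in (0 : ℝ)..T, ∫ r in (0 : ℝ)..s, logKernel H ζ p C (s - r)
      = T * (∫ r in (0 : ℝ)..T, logKernel H ζ p C r)
        - ∫ r in (0 : ℝ)..T, r * logKernel H ζ p C r := by
  have hI : ∀ s : ℝ, ∫ r in (0 : ℝ)..s, logKernel H ζ p C (s - r)
      = ∫ r in (0 : ℝ)..s, logKernel H ζ p C r := by
    intro s
    rw [intervalIntegral.integral_comp_sub_left (logKernel H ζ p C) s]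
    simp
  simp_rw [hI]
  have hint := aux_int_s6 H ζ p C hH0 hp hC 0 T le_rfl hT.le
  have h := intervalIntegral.integral_mul_deriv_eq_deriv_mul_of_hasDerivAt
    (a := 0) (b := T) (u := fun s : ℝ => s) (u' := fun _ => (1 : ℝ))
    (v := fun s => ∫ r in (0 : ℝ)..s, logKernel H ζ p C r) (v' := logKernel H ζ p C)
    continuousOn_id
    (intervalIntegral.continuousOn_primitive_interval' hint Set.left_mem_uIcc)
    (fun x _ => hasDerivAt_id x)
    (by
      intro x hx
      rw [min_eq_left hT.le] at hx
      have hx0 : 0 < x := hx.1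
      exact intervalIntegral.integral_hasDerivAt_right
        (aux_int_s6 H ζ p C hH0 hp hC 0 x le_rfl hx0.le)
        ((aux_cont H ζ p C).stronglyMeasurableAtFilter isOpen_Ioi x hx0)
        ((aux_cont H ζ p C).continuousAt (Ioi_mem_nhds hx0)))
    intervalIntegrable_const hint
  simp only [one_mul, zero_mul, sub_zero] at h
  rw [h]; ring

theorem aux_small (H ζ p C : ℝ) (hζ : 0 < ζ) (u : ℝ) (hu : 0 < u)
    (hu' : u ≤ Real.exp (-1/ζ)) :
    logKernel H ζ p C u = C * ζ ^ (-p) * (u ^ (H - 1/2) * (Real.log (1 / u)) ^ (-p)) := by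
  have h1 : Real.log u ≤ -1/ζ := (Real.log_le_iff_le_exp hu).mpr hu'
  have hl : 1 / ζ ≤ Real.log (1 / u) := by
    rw [one_div u, Real.log_inv]
    have : -1/ζ = -(1/ζ) := by ring
    linarith
  have h2 : 1 ≤ ζ * Real.log (1 / u) := by
    rw [div_le_iff₀ hζ] at hl; linarith
  have h3 : 0 ≤ Real.log (1 / u) := le_trans (by positivity) hl
  unfold logKernel
  rw [max_eq_left h2, Real.mul_rpow hζ.le h3]; ring

theorem aux_large (H ζ p C : ℝ) (hζ : 0 < ζ) (u : ℝ) (hu : 0 < u)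
    (hu' : Real.exp (-1/ζ) ≤ u) :
    logKernel H ζ p C u = C * u ^ (H - 1/2) := by
  have h1 : -1/ζ ≤ Real.log u := (Real.le_log_iff_exp_le hu).mpr hu'
  have hl : Real.log (1 / u) ≤ 1 / ζ := by
    rw [one_div u, Real.log_inv]
    have : -1/ζ = -(1/ζ) := by ring
    linarith
  have h2 : ζ * Real.log (1 / u) ≤ 1 := by
    rw [le_div_iff₀ hζ] at hl; linarith
  unfold logKernel
  rw [max_eq_right h2, Real.one_rpow, mul_one]

theorem aux_m0 (H ζ p C : ℝ) (hζ : 0 < ζ) (x : ℝ) (hx : 0 < x) (hx1 : x < 1)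
    (hx' : x ≤ Real.exp (-1/ζ)) :
    ∫ r in (0 : ℝ)..x, logKernel H ζ p C r
      = C * ζ ^ (-p) * ((Real.log (1 / x)) ^ (1 - p)
        * expIntegralE p ((H + 1/2) * Real.log (1 / x))) := by
  rw [← aux_subst _ p x hx hx1, ← intervalIntegral.integral_const_mul,
    intervalIntegral.integral_of_le hx.le, intervalIntegral.integral_of_le hx.le]
  apply setIntegral_congr_fun measurableSet_Ioc
  intro u hu
  simp only
  rw [aux_small H ζ p C hζ u hu.1 (hu.2.trans hx'), show H + 1/2 - 1 = H - 1/2 by ring]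

theorem aux_m1 (H ζ p C : ℝ) (hζ : 0 < ζ) (x : ℝ) (hx : 0 < x) (hx1 : x < 1)
    (hx' : x ≤ Real.exp (-1/ζ)) :
    ∫ r in (0 : ℝ)..x, r * logKernel H ζ p C r
      = C * ζ ^ (-p) * ((Real.log (1 / x)) ^ (1 - p)
        * expIntegralE p ((H + 3/2) * Real.log (1 / x))) := by
  rw [← aux_subst _ p x hx hx1, ← intervalIntegral.integral_const_mul,
    intervalIntegral.integral_of_le hx.le, intervalIntegral.integral_of_le hx.le]
  apply setIntegral_congr_fun measurableSet_Ioc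
  intro u hu
  simp only
  rw [aux_small H ζ p C hζ u hu.1 (hu.2.trans hx'), show H + 3/2 - 1 = 1 + (H - 1/2) by ring,
    Real.rpow_add hu.1, Real.rpow_one]
  ring

theorem aux_l0 (H ζ p C : ℝ) (hH0 : 0 ≤ H) (hζ : 0 < ζ) (x T : ℝ) (hx : 0 < x) (hxT : x ≤ T)
    (hx' : Real.exp (-1/ζ) ≤ x) :
    ∫ r in x..T, logKernel H ζ p C r
      = C * ((T ^ (H + 1/2) - x ^ (H + 1/2)) / (H + 1/2)) := by
  have h := integral_rpow (a := x) (b := T) (r := H - 1/2) (Or.inl (by linarith))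
  rw [show H - 1/2 + 1 = H + 1/2 by ring] at h
  rw [← h, ← intervalIntegral.integral_const_mul,
    intervalIntegral.integral_of_le hxT, intervalIntegral.integral_of_le hxT]
  apply setIntegral_congr_fun measurableSet_Ioc
  intro u hu
  exact aux_large H ζ p C hζ u (hx.trans hu.1) (hx'.trans hu.1.le)

theorem aux_l1 (H ζ p C : ℝ) (hH0 : 0 ≤ H) (hζ : 0 < ζ) (x T : ℝ) (hx : 0 < x) (hxT : x ≤ T)
    (hx' : Real.exp (-1/ζ) ≤ x) :
    ∫ r in x..T, r * logKernel H ζ p C r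
      = C * ((T ^ (H + 3/2) - x ^ (H + 3/2)) / (H + 3/2)) := by
  have h := integral_rpow (a := x) (b := T) (r := 1 + (H - 1/2)) (Or.inl (by linarith))
  rw [show 1 + (H - 1/2) + 1 = H + 3/2 by ring] at h
  rw [← h, ← intervalIntegral.integral_const_mul,
    intervalIntegral.integral_of_le hxT, intervalIntegral.integral_of_le hxT]
  apply setIntegral_congr_fun measurableSet_Ioc
  intro u hu
  have hu0 : 0 < u := hx.trans hu.1
  simp only
  rw [aux_large H ζ p C hζ u hu0 (hx'.trans hu.1.le), Real.rpow_add hu0, Real.rpow_one]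
  ring

theorem integrated_covariance (H ζ p C : ℝ) (hH0 : 0 ≤ H) (hH : H < 1/2)
    (hζ : 0 < ζ) (hp : 1 < p) (hC : 0 < C) (χ : ℝ) (hχ : χ = Real.exp (-1/ζ))
    (T : ℝ) (hT0 : 0 < T) (hT1 : T < 1) :
    ∫ s in (0 : ℝ)..T, ∫ r in (0 : ℝ)..s, logKernel H ζ p C (s - r)
      = I₁ H ζ p C (min T χ)
        + (if χ < T then I₂ H C T χ + I₃ H ζ p C T χ else 0) := by
  have hχ0 : 0 < χ := by rw [hχ]; exact Real.exp_pos _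
  have hχ1 : χ < 1 := by
    rw [hχ, Real.exp_lt_one_iff]
    exact div_neg_of_neg_of_pos (by norm_num) hζ
  rw [aux_parts H ζ p C hH0 hp hC T hT0]
  by_cases h : χ < T
  · rw [if_pos h, min_eq_right h.le]
    have hi := aux_int_s6 H ζ p C hH0 hp hC
    have e0 := intervalIntegral.integral_add_adjacent_intervals
      (hi 0 χ le_rfl hχ0.le) (hi χ T hχ0.le hT0.le)
    have e1 := intervalIntegral.integral_add_adjacent_intervals
      ((hi 0 χ le_rfl hχ0.le).continuousOn_mul continuousOn_id)
      ((hi χ T hχ0.le hT0.le).continuousOn_mul continuousOn_id)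
    simp only [id] at e1
    rw [← e0, ← e1, aux_m0 H ζ p C hζ χ hχ0 hχ1 hχ.le, aux_m1 H ζ p C hζ χ hχ0 hχ1 hχ.le,
      aux_l0 H ζ p C hH0 hζ χ T hχ0 h.le hχ.ge, aux_l1 H ζ p C hH0 hζ χ T hχ0 h.le hχ.ge]
    unfold I₁ I₂ I₃
    have hT3 : T ^ (H + 3/2) = T * T ^ (H + 1/2) := by
      rw [show H + 3/2 = 1 + (H + 1/2) by ring, Real.rpow_add hT0, Real.rpow_one]
    have hχ3 : χ ^ (H + 3/2) = χ * χ ^ (H + 1/2) := by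
      rw [show H + 3/2 = 1 + (H + 1/2) by ring, Real.rpow_add hχ0, Real.rpow_one]
    rw [hT3, hχ3]
    generalize T ^ (H + 1/2) = A
    generalize χ ^ (H + 1/2) = B
    generalize expIntegralE p ((H + 1/2) * Real.log (1 / χ)) = E
    generalize expIntegralE p ((H + 3/2) * Real.log (1 / χ)) = F
    generalize Real.log (1 / χ) ^ (1 - p) = G
    generalize ζ ^ (-p) = Z
    have ha : H + 1/2 ≠ 0 := by positivity
    have hb : H + 3/2 ≠ 0 := by positivity
    have hb' : H + 3/2 = (H + 1/2) + 1 := by ring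
    rw [hb'] at hb ⊢
    generalize H + 1/2 = a at ha hb ⊢
    field_simp
    ring
  · rw [if_neg h]
    have hle : T ≤ χ := not_lt.mp h
    rw [min_eq_left hle, aux_m0 H ζ p C hζ T hT0 hT1 (hχ ▸ hle),
      aux_m1 H ζ p C hζ T hT0 hT1 (hχ ▸ hle)]
    unfold I₁
    ring
end

section
/- For every b > 0, the exponential integral satisfies the first-order asymptotic expansion E_b(x) = (e^{−x}/x)(1 + o(1)) as x → ∞; that is, x e^{x} E_b(x) → 1 as x → ∞. -/
open MeasureTheory Filter

theorem expIntegralE_subst (b x : ℝ) (hx : 0 < x) :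
    x * Real.exp x * expIntegralE b x =
      ∫ s in Set.Ioi (0 : ℝ), Real.exp (-s) * (1 + x⁻¹ * s) ^ (-b) := by
  have h1 := integral_comp_mul_left_Ioi
    (fun u : ℝ => Real.exp (-x * (u + 1)) * (u + 1) ^ (-b)) 0 (inv_pos.mpr hx)
  have h2 : expIntegralE b x =
      ∫ u in Set.Ioi (0 : ℝ), Real.exp (-x * (u + 1)) * (u + 1) ^ (-b) := by
    have := (measurePreserving_add_right volume (1 : ℝ)).setIntegral_preimage_emb
      (MeasurableEquiv.addRight (1 : ℝ)).measurableEmbedding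
      (fun t : ℝ => Real.exp (-x * t) * t ^ (-b)) (Set.Ioi 1)
    rw [expIntegralE, ← this]
    simp
  simp only [mul_zero, inv_inv, smul_eq_mul] at h1
  rw [h2, mul_right_comm, ← h1, ← integral_mul_const]
  refine integral_congr_ae (Eventually.of_forall fun s => ?_)
  simp only
  have : Real.exp (-s) = Real.exp (-x * (x⁻¹ * s + 1)) * Real.exp x := by
    rw [← Real.exp_add]
    congr 1
    field_simp
    ring
  rw [this, add_comm 1]
  ring

theorem exp_integral_asymptotic (b : ℝ) (hb : 0 < b) :
    Tendsto (fun x : ℝ => x * Real.exp x * expIntegralE b x) atTop (nhds 1) := by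
  have key : Tendsto (fun x : ℝ => ∫ s in Set.Ioi (0 : ℝ), Real.exp (-s) * (1 + x⁻¹ * s) ^ (-b))
      atTop (nhds (∫ s in Set.Ioi (0 : ℝ), Real.exp (-s))) := by
    refine tendsto_integral_filter_of_dominated_convergence (fun s => Real.exp (-s)) ?_ ?_ ?_ ?_
    · refine Eventually.of_forall fun x => Measurable.aestronglyMeasurable ?_
      fun_prop
    · filter_upwards [eventually_gt_atTop 0] with x hx
      filter_upwards [ae_restrict_mem measurableSet_Ioi] with s hs
      have hs' : 0 ≤ x⁻¹ * s := mul_nonneg (inv_pos.mpr hx).le (le_of_lt hs)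
      have h0 : 0 ≤ (1 + x⁻¹ * s) ^ (-b) := Real.rpow_nonneg (by linarith) _
      have h1 : (1 + x⁻¹ * s) ^ (-b) ≤ 1 :=
        Real.rpow_le_one_of_one_le_of_nonpos (by linarith) (by linarith)
      rw [Real.norm_eq_abs, abs_of_nonneg (mul_nonneg (Real.exp_pos _).le h0)]
      exact mul_le_of_le_one_right (Real.exp_pos _).le h1
    · simpa [IntegrableOn] using integrableOn_exp_mul_Ioi (a := -1) (by norm_num) 0
    · refine Eventually.of_forall fun s => ?_
      have h1 : Tendsto (fun x : ℝ => 1 + x⁻¹ * s) atTop (nhds 1) := by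
        simpa using (tendsto_inv_atTop_zero.mul_const s).const_add (1 : ℝ)
      have h2 := (h1.rpow_const (p := -b) (Or.inl one_ne_zero)).const_mul (Real.exp (-s))
      simpa using h2
  rw [integral_exp_neg_Ioi_zero] at key
  refine key.congr' ?_
  filter_upwards [eventually_gt_atTop 0] with x hx
  exact (expIntegralE_subst b x hx).symm
end

section
/- Let H ∈ [0,1/2), ζ > 0, p > 1, C > 0. As T → 0⁺, the integrated kernel satisfies the asymptotic equivalence ∫₀ᵀ ∫₀ˢ K(s−r) dr ds ∼ ( C ζ^{−p} / ( (H+1/2)(H+3/2) ) ) · (log(1/T))^{−p} · T^{H+3/2}; equivalently, T^{−3/2} ∫₀ᵀ ∫₀ˢ K(s−r) dr ds ∼ ( C ζ^{−p} / ( (H+1/2)(H+3/2) ) ) (log(1/T))^{−p} T^{H} as T → 0⁺. -/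
open MeasureTheory Filter

open MeasureTheory Filter Topology Set in
lemma tendsto_logInv : Tendsto (fun T : ℝ => Real.log (1 / T)) (𝓝[>] 0) atTop := by
  have : Tendsto (fun T : ℝ => T⁻¹) (𝓝[>] 0) atTop := tendsto_inv_nhdsGT_zero
  simp only [one_div]
  exact Real.tendsto_log_atTop.comp this

open MeasureTheory Filter Topology Set in
lemma primitive_contOn (f : ℝ → ℝ) (hint : ∀ T > 0, IntervalIntegrable f volume 0 T)
    (T : ℝ) (hT : 0 < T) : ContinuousOn (fun x => ∫ t in (0:ℝ)..x, f t) (Icc 0 T) := by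
  have h := intervalIntegral.continuousOn_primitive_interval (μ := volume) (f := f)
    (a := 0) (b := T) (by
      rw [uIcc_of_le hT.le, integrableOn_Icc_iff_integrableOn_Ioc]
      exact (hint T hT).1)
  rwa [uIcc_of_le hT.le] at h

open MeasureTheory Filter Topology Set in
lemma karamata_log (f : ℝ → ℝ) (a p c : ℝ) (ha : -1 < a) (hp : 0 < p)
    (hf : ContinuousOn f (Ioi 0)) (hint : ∀ T > 0, IntervalIntegrable f volume 0 T)
    (hlim : Tendsto (fun T => f T / (T ^ a * (Real.log (1 / T)) ^ (-p))) (𝓝[>] 0) (𝓝 c)) :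
    Tendsto (fun T => (∫ t in (0:ℝ)..T, f t) / (T ^ (a + 1) * (Real.log (1 / T)) ^ (-p)))
      (𝓝[>] 0) (𝓝 (c / (a + 1))) := by
  have ha1 : 0 < a + 1 := by linarith
  have hL := tendsto_logInv
  have hLpos : ∀ᶠ T in 𝓝[>] (0:ℝ), 0 < Real.log (1 / T) := hL.eventually_gt_atTop 0
  have hTpos : ∀ᶠ T in 𝓝[>] (0:ℝ), 0 < T := self_mem_nhdsWithin
  have key : ∀ T : ℝ, 0 < T → 0 < Real.log (1 / T) →
      (a + 1) * T ^ a * (Real.log (1 / T)) ^ (-p) +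
        T ^ (a + 1) * (-(T⁻¹) * (-p) * (Real.log (1 / T)) ^ (-p - 1)) =
      (T ^ a * (Real.log (1 / T)) ^ (-p)) * ((a + 1) + p / Real.log (1 / T)) := by
    intro T hT hl
    rw [Real.rpow_sub_one hl.ne', Real.rpow_add_one hT.ne']
    field_simp
  refine HasDerivAt.lhopital_zero_nhdsGT (f' := f)
    (g' := fun T => (a + 1) * T ^ a * (Real.log (1 / T)) ^ (-p) +
        T ^ (a + 1) * (-(T⁻¹) * (-p) * (Real.log (1 / T)) ^ (-p - 1))) ?_ ?_ ?_ ?_ ?_ ?_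
  · filter_upwards [hTpos] with T hT
    exact intervalIntegral.integral_hasDerivAt_right (hint T hT)
      (hf.stronglyMeasurableAtFilter isOpen_Ioi T hT) (hf.continuousAt (Ioi_mem_nhds hT))
  · filter_upwards [hTpos, hLpos] with T hT hl
    have h1 : HasDerivAt (fun T : ℝ => T ^ (a + 1)) ((a + 1) * T ^ a) T := by
      simpa using Real.hasDerivAt_rpow_const (x := T) (p := a + 1) (Or.inl hT.ne')
    have h2 : HasDerivAt (fun T : ℝ => Real.log (1 / T)) (-(T⁻¹)) T := by
      simp only [one_div, Real.log_inv]
      exact (Real.hasDerivAt_log hT.ne').neg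
    exact h1.mul (h2.rpow_const (Or.inl hl.ne'))
  · filter_upwards [hTpos, hLpos] with T hT hl
    rw [key T hT hl]
    positivity
  · have h := (primitive_contOn f hint 1 one_pos) 0 (by simp)
    have h' : Tendsto (fun x => ∫ t in (0:ℝ)..x, f t) (𝓝[Icc 0 1] 0) (𝓝 0) := by
      simpa [ContinuousWithinAt] using h
    refine h'.mono_left ?_
    rw [← nhdsWithin_Ioo_eq_nhdsGT (one_pos : (0:ℝ) < 1)]
    exact nhdsWithin_mono _ Ioo_subset_Icc_self
  · have h1 : Tendsto (fun T : ℝ => T ^ (a + 1)) (𝓝[>] 0) (𝓝 0) := by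
      have := (Real.continuousAt_rpow_const 0 (a + 1) (Or.inr ha1.le)).tendsto
      rw [Real.zero_rpow ha1.ne'] at this
      exact this.mono_left nhdsWithin_le_nhds
    simpa using h1.mul ((tendsto_rpow_neg_atTop hp).comp hL)
  · have h3 : Tendsto (fun T : ℝ => (a + 1) + p / Real.log (1 / T)) (𝓝[>] 0) (𝓝 (a + 1)) := by
      simpa using (tendsto_const_nhds (x := a + 1)).add (hL.const_div_atTop p)
    refine (hlim.div h3 ha1.ne').congr' ?_
    filter_upwards [hTpos, hLpos] with T hT hl
    rw [key T hT hl, Pi.div_apply, div_div]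

open MeasureTheory Filter Topology Set in
lemma logKernel_contOn (H ζ p C : ℝ) : ContinuousOn (logKernel H ζ p C) (Ioi 0) := by
  unfold logKernel
  intro x hx
  have hx : 0 < x := hx
  apply ContinuousAt.continuousWithinAt
  have h1 : ContinuousAt (fun r : ℝ => Real.log (1 / r)) x := by
    have : ContinuousAt (fun r : ℝ => 1 / r) x := continuousAt_const.div continuousAt_id hx.ne'
    exact this.log (by positivity)
  have h2 : ContinuousAt (fun r : ℝ => max (ζ * Real.log (1 / r)) 1) x :=
    (h1.const_mul ζ).max continuousAt_const
  exact (continuousAt_const.mul (Real.continuousAt_rpow_const x _ (Or.inl hx.ne'))).mul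
    (h2.rpow_const (Or.inl (by positivity)))

open MeasureTheory Filter Topology Set in
lemma logKernel_int (H ζ p C : ℝ) (hH0 : 0 ≤ H) (hp : 0 < p) (hC : 0 < C) (T : ℝ) (hT : 0 < T) :
    IntervalIntegrable (logKernel H ζ p C) volume 0 T := by
  have h : IntervalIntegrable (fun r : ℝ => C * r ^ (H - 1/2)) volume 0 T :=
    (intervalIntegral.intervalIntegrable_rpow' (by linarith)).const_mul C
  refine h.mono_fun ?_ ?_
  · rw [uIoc_of_le hT.le]
    exact ((logKernel_contOn H ζ p C).mono Ioc_subset_Ioi_self).aestronglyMeasurable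
      measurableSet_Ioc
  · rw [uIoc_of_le hT.le]
    filter_upwards [ae_restrict_mem measurableSet_Ioc] with r hr
    unfold logKernel
    rw [norm_mul]
    apply mul_le_of_le_one_right (norm_nonneg _)
    have h1 : (1:ℝ) ≤ max (ζ * Real.log (1 / r)) 1 := le_max_right _ _
    rw [Real.norm_of_nonneg (by positivity)]
    exact Real.rpow_le_one_of_one_le_of_nonpos h1 (by linarith)

theorem integrated_kernel_small_time (H ζ p C : ℝ) (hH0 : 0 ≤ H) (hH : H < 1/2)
    (hζ : 0 < ζ) (hp : 1 < p) (hC : 0 < C) :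
    Tendsto
      (fun T : ℝ =>
        (∫ s in (0 : ℝ)..T, ∫ r in (0 : ℝ)..s, logKernel H ζ p C (s - r))
          / (C * ζ ^ (-p) / ((H + 1/2) * (H + 3/2))
              * (Real.log (1 / T)) ^ (-p) * T ^ (H + 3/2)))
      (nhdsWithin 0 (Set.Ioi 0)) (nhds 1) := by
  have hp0 : 0 < p := by linarith
  have hint := logKernel_int H ζ p C hH0 hp0 hC
  have hL := tendsto_logInv
  have hTpos : ∀ᶠ T in nhdsWithin (0:ℝ) (Set.Ioi 0), 0 < T := self_mem_nhdsWithin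
  have hD : 0 < C * ζ ^ (-p) := by positivity
  have h0 : Tendsto (fun T => logKernel H ζ p C T /
      (T ^ (H - 1/2) * (Real.log (1 / T)) ^ (-p)))
      (nhdsWithin 0 (Set.Ioi 0)) (nhds (C * ζ ^ (-p))) := by
    refine tendsto_const_nhds.congr' ?_
    filter_upwards [hTpos, hL.eventually_gt_atTop 0, hL.eventually_ge_atTop (1 / ζ)]
      with T hT hl hl2
    have : 1 ≤ ζ * Real.log (1 / T) := by
      rwa [div_le_iff₀' hζ] at hl2
    unfold logKernel
    rw [max_eq_left this, Real.mul_rpow hζ.le hl.le]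
    have h1 : 0 < T ^ (H - 1/2) := by positivity
    have h2 : 0 < (Real.log (1 / T)) ^ (-p) := by positivity
    field_simp
  have h1 := karamata_log _ (H - 1/2) p _ (by linarith) hp0 (logKernel_contOn H ζ p C) hint h0
  have hF : ∀ T > 0, ContinuousOn (fun x => ∫ t in (0:ℝ)..x, logKernel H ζ p C t) (Set.Icc 0 T) :=
    primitive_contOn _ hint
  have h2 := karamata_log (fun x => ∫ t in (0:ℝ)..x, logKernel H ζ p C t) (H - 1/2 + 1) p _
    (by linarith) hp0
    (by
      intro x hx
      have hx : 0 < x := hx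
      exact ((hF (x + 1) (by linarith)).continuousAt
        (Icc_mem_nhds hx (by linarith))).continuousWithinAt)
    (by
      intro T hT
      apply ContinuousOn.intervalIntegrable
      rw [Set.uIcc_of_le hT.le]
      exact hF T hT) h1
  have hE : 0 < C * ζ ^ (-p) / ((H + 1/2) * (H + 3/2)) := by positivity
  have h3 := h2.div_const (C * ζ ^ (-p) / ((H + 1/2) * (H + 3/2)))
  have e1 : C * ζ ^ (-p) / (H - 1/2 + 1) / (H - 1/2 + 1 + 1) /
      (C * ζ ^ (-p) / ((H + 1/2) * (H + 3/2))) = 1 := by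
    rw [show H - 1/2 + 1 = H + 1/2 by ring, show H + 1/2 + 1 = H + 3/2 by ring,
      div_div (C * ζ ^ (-p)) (H + 1/2) (H + 3/2)]
    exact div_self hE.ne'
  rw [e1] at h3
  refine h3.congr fun T => ?_
  rw [show H - 1/2 + 1 + 1 = H + 3/2 by ring, div_div]
  congr 1
  · apply intervalIntegral.integral_congr
    intro s _
    simp [intervalIntegral.integral_comp_sub_left (fun x => logKernel H ζ p C x) s]
  · ring
end

section
/- Let H ∈ [0,1/2), ζ > 0, p > 1, C > 0. Then the limit 𝒦 := lim_{t→0⁺} ( ∫₀ᵗ K(s) ds ) / ( t ∫₀ᵗ K(s)² ds )^{1/2} exists and equals √(2H)/(H+1/2). In particular 𝒦 = 0 when H = 0, and 0 < 𝒦 ≤ 1 when 0 < H < 1/2. -/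
open MeasureTheory Filter

/-- the modulating factor -/
noncomputable def modL (ζ r : ℝ) : ℝ := max (ζ * Real.log (1 / r)) 1

lemma modL_pos (ζ r : ℝ) : 0 < modL ζ r := lt_of_lt_of_le one_pos (le_max_right _ _)

lemma modL_anti {ζ r s : ℝ} (hζ : 0 < ζ) (hr : 0 < r) (hrs : r ≤ s) : modL ζ s ≤ modL ζ r := by
  unfold modL
  have : Real.log (1 / s) ≤ Real.log (1 / r) :=
    Real.log_le_log (by have := hr.trans_le hrs; positivity) (one_div_le_one_div_of_le hr hrs)
  gcongr

lemma modL_meas (ζ : ℝ) : Measurable (modL ζ) := by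
  unfold modL
  fun_prop

lemma log_inv_atTop : Tendsto (fun t : ℝ => Real.log (1 / t)) (nhdsWithin 0 (Set.Ioi 0)) atTop := by
  simp only [one_div]
  exact Real.tendsto_log_atTop.comp tendsto_inv_nhdsGT_zero

lemma modL_ratio {ζ u : ℝ} (hζ : 0 < ζ) (hu : 0 < u) (hu1 : u ≤ 1) :
    Tendsto (fun t : ℝ => modL ζ (t * u) / modL ζ t) (nhdsWithin 0 (Set.Ioi 0)) (nhds 1) := by
  have h1 : Tendsto (fun t : ℝ => 1 + Real.log (1 / u) / Real.log (1 / t))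
      (nhdsWithin 0 (Set.Ioi 0)) (nhds (1 + 0)) :=
    tendsto_const_nhds.add (log_inv_atTop.const_div_atTop _)
  rw [add_zero] at h1
  refine h1.congr' ?_
  filter_upwards [log_inv_atTop.eventually_ge_atTop (1 / ζ), self_mem_nhdsWithin] with t ht ht0
  have ht0 : 0 < t := ht0
  have e1 : 1 ≤ ζ * Real.log (1 / t) := by
    rw [div_le_iff₀ hζ] at ht; linarith
  have hpos : 0 < Real.log (1 / t) := lt_of_lt_of_le (by positivity) ht
  have e2 : Real.log (1 / (t * u)) = Real.log (1 / t) + Real.log (1 / u) := by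
    rw [← Real.log_mul (by positivity) (by positivity)]; congr 1; field_simp
  have e3 : 0 ≤ Real.log (1 / u) := Real.log_nonneg (by rw [le_div_iff₀ hu]; linarith)
  have e4 : 1 ≤ ζ * Real.log (1 / (t * u)) := by
    rw [e2]; nlinarith [mul_nonneg hζ.le e3]
  unfold modL
  rw [max_eq_left e1, max_eq_left e4, e2]
  field_simp

/-- Karamata-type limit for the power `a > -1`. -/
lemma karamata {ζ a q : ℝ} (hζ : 0 < ζ) (ha : -1 < a) (hq : 0 < q) :
    Tendsto (fun t : ℝ => (∫ s in (0:ℝ)..t, s ^ a * modL ζ s ^ (-q)) /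
      (t ^ (a + 1) * modL ζ t ^ (-q))) (nhdsWithin 0 (Set.Ioi 0)) (nhds (1 / (a + 1))) := by
  have key : Tendsto (fun t : ℝ => ∫ u in (0:ℝ)..1, u ^ a * (modL ζ (t * u) / modL ζ t) ^ (-q))
      (nhdsWithin 0 (Set.Ioi 0)) (nhds (∫ u in (0:ℝ)..1, u ^ a)) := by
    apply intervalIntegral.tendsto_integral_filter_of_dominated_convergence (fun u => u ^ a)
    · refine Eventually.of_forall fun t => ?_
      have := modL_meas ζ
      apply Measurable.aestronglyMeasurable
      fun_prop
    · filter_upwards [self_mem_nhdsWithin] with t ht0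
      have ht0 : 0 < t := ht0
      refine Eventually.of_forall fun u hu => ?_
      rw [Set.uIoc_of_le zero_le_one] at hu
      have hm := modL_pos ζ t
      have hm2 := modL_pos ζ (t * u)
      have h1 : 1 ≤ modL ζ (t * u) / modL ζ t := by
        rw [le_div_iff₀ hm, one_mul]
        exact modL_anti hζ (mul_pos ht0 hu.1) (by nlinarith [hu.2])
      have h2 := Real.rpow_le_one_of_one_le_of_nonpos h1 (by linarith : -q ≤ 0)
      have h3 : 0 ≤ u ^ a := Real.rpow_nonneg hu.1.le _
      rw [Real.norm_of_nonneg (by positivity)]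
      nlinarith
    · exact intervalIntegral.intervalIntegrable_rpow' ha
    · refine Eventually.of_forall fun u hu => ?_
      rw [Set.uIoc_of_le zero_le_one] at hu
      have := ((modL_ratio hζ hu.1 hu.2).rpow_const (p := -q) (Or.inl one_ne_zero)).const_mul (u ^ a)
      simpa using this
  rw [integral_rpow (Or.inl ha)] at key
  rw [Real.one_rpow, Real.zero_rpow (by linarith), sub_zero] at key
  refine key.congr' ?_
  filter_upwards [self_mem_nhdsWithin] with t ht0
  have ht0 : 0 < t := ht0
  have hm := modL_pos ζ t
  have hs := intervalIntegral.mul_integral_comp_mul_left (a := 0) (b := 1)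
    (f := fun s => s ^ a * modL ζ s ^ (-q)) t
  rw [mul_zero, mul_one] at hs
  rw [← hs, eq_div_iff (by positivity), ← intervalIntegral.integral_mul_const,
    ← intervalIntegral.integral_const_mul]
  apply intervalIntegral.integral_congr_ae
  refine Eventually.of_forall fun u hu => ?_
  rw [Set.uIoc_of_le zero_le_one] at hu
  have hm2 := modL_pos ζ (t * u)
  rw [Real.div_rpow hm2.le hm.le, Real.mul_rpow ht0.le hu.1.le, Real.rpow_add ht0, Real.rpow_one]
  have : modL ζ t ^ (-q) ≠ 0 := by positivity
  field_simp

lemma kernel_sq_s13 {H ζ p C s : ℝ} (hs : 0 < s) :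
    logKernel H ζ p C s ^ 2 = C ^ 2 * (s ^ (2 * H - 1) * modL ζ s ^ (-(2 * p))) := by
  have hm := modL_pos ζ s
  change (C * s ^ (H - 1/2) * modL ζ s ^ (-p)) ^ 2 = _
  rw [mul_pow, mul_pow, ← Real.rpow_mul_natCast hs.le, ← Real.rpow_mul_natCast hm.le]
  rw [mul_assoc]
  congr 3 <;> push_cast <;> ring

lemma ratio_eq {H ζ p C t : ℝ} (hC : 0 < C) (ht : 0 < t) :
    (∫ s in (0 : ℝ)..t, logKernel H ζ p C s)
          / Real.sqrt (t * ∫ s in (0 : ℝ)..t, (logKernel H ζ p C s) ^ 2) =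
    ((∫ s in (0:ℝ)..t, s ^ (H - 1/2) * modL ζ s ^ (-p)) /
      (t ^ (H - 1/2 + 1) * modL ζ t ^ (-p))) /
    Real.sqrt ((∫ s in (0:ℝ)..t, s ^ (2 * H - 1) * modL ζ s ^ (-(2 * p))) /
      (t ^ (2 * H - 1 + 1) * modL ζ t ^ (-(2 * p)))) := by
  have hm := modL_pos ζ t
  have e1 : (∫ s in (0 : ℝ)..t, logKernel H ζ p C s) =
      C * ∫ s in (0:ℝ)..t, s ^ (H - 1/2) * modL ζ s ^ (-p) := by
    rw [← intervalIntegral.integral_const_mul]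
    congr 1; ext s; unfold logKernel modL; ring
  have e2 : (∫ s in (0 : ℝ)..t, logKernel H ζ p C s ^ 2) =
      C ^ 2 * ∫ s in (0:ℝ)..t, s ^ (2 * H - 1) * modL ζ s ^ (-(2 * p)) := by
    rw [← intervalIntegral.integral_const_mul]
    apply intervalIntegral.integral_congr_ae
    refine Eventually.of_forall fun u hu => ?_
    rw [Set.uIoc_of_le ht.le] at hu
    exact kernel_sq_s13 hu.1
  rw [e1, e2]
  set N := ∫ s in (0:ℝ)..t, s ^ (H - 1/2) * modL ζ s ^ (-p)
  set D := ∫ s in (0:ℝ)..t, s ^ (2 * H - 1) * modL ζ s ^ (-(2 * p))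
  set W := t ^ (H - 1/2 + 1) * modL ζ t ^ (-p) with hW
  have hWp : 0 < W := by positivity
  have hW2 : t * (t ^ (2 * H - 1 + 1) * modL ζ t ^ (-(2 * p))) = W ^ 2 := by
    rw [hW, mul_pow, ← Real.rpow_mul_natCast ht.le, ← Real.rpow_mul_natCast hm.le, ← mul_assoc]
    congr 1
    · nth_rewrite 1 [← Real.rpow_one t]
      rw [← Real.rpow_add ht]; congr 1; push_cast; ring
    · congr 1; push_cast; ring
  set V := t ^ (2 * H - 1 + 1) * modL ζ t ^ (-(2 * p)) with hV
  have hVp : 0 < V := by positivity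
  have e3 : t * (C ^ 2 * D) = (C * W) ^ 2 * (D / V) := by
    rw [mul_pow, ← hW2]; field_simp
  rw [e3, Real.sqrt_mul (by positivity), Real.sqrt_sq (by positivity)]
  rw [div_div, mul_assoc, mul_div_mul_left _ _ hC.ne']

lemma lower_zero {ζ q t : ℝ} (hζ : 0 < ζ) (hq : 0 < q) (ht : 0 < t) (ht1 : t < 1)
    (hi : IntervalIntegrable (fun s : ℝ => s ^ (2 * (0:ℝ) - 1) * modL ζ s ^ (-q)) volume 0 t) :
    2 ^ (-q) * Real.log (1 / t) ≤
      (∫ s in (0:ℝ)..t, s ^ (2 * (0:ℝ) - 1) * modL ζ s ^ (-q)) /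
        (t ^ (2 * (0:ℝ) - 1 + 1) * modL ζ t ^ (-q)) := by
  have hm := modL_pos ζ t
  have htt : t ^ 2 ≤ t := by nlinarith
  have ht2 : 0 < t ^ 2 := by positivity
  have hm2 : modL ζ (t ^ 2) ≤ 2 * modL ζ t := by
    have e : Real.log (1 / t ^ 2) = 2 * Real.log (1 / t) := by
      rw [← one_div_pow, Real.log_pow]; norm_num
    unfold modL
    rw [e]
    apply max_le
    · nlinarith [le_max_left (ζ * Real.log (1 / t)) 1]
    · nlinarith [le_max_right (ζ * Real.log (1 / t)) 1]
  have h0 : t ^ (2 * (0:ℝ) - 1 + 1) = 1 := by norm_num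
  rw [h0, one_mul, le_div_iff₀ (by positivity)]
  have sub : Set.uIcc (t ^ 2) t ⊆ Set.uIcc 0 t := by
    rw [Set.uIcc_of_le htt, Set.uIcc_of_le ht.le]; exact Set.Icc_subset_Icc ht2.le le_rfl
  calc 2 ^ (-q) * Real.log (1 / t) * modL ζ t ^ (-q)
      = ∫ s in (t ^ 2)..t, s⁻¹ * (2 * modL ζ t) ^ (-q) := by
        rw [intervalIntegral.integral_mul_const, integral_inv_of_pos ht2 ht,
          Real.mul_rpow zero_le_two hm.le]
        have : t / t ^ 2 = 1 / t := by field_simp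
        rw [this]; ring
    _ ≤ ∫ s in (t ^ 2)..t, s ^ (2 * (0:ℝ) - 1) * modL ζ s ^ (-q) := by
        apply intervalIntegral.integral_mono_on htt
        · apply IntervalIntegrable.mul_const
          apply intervalIntegral.intervalIntegrable_inv
          · intro x hx
            rw [Set.uIcc_of_le htt] at hx
            linarith [hx.1]
          · exact continuousOn_id
        · exact hi.mono_set sub
        · intro s hs
          have hs0 : 0 < s := ht2.trans_le hs.1
          have : s ^ (2 * (0:ℝ) - 1) = s⁻¹ := by
            rw [← Real.rpow_neg_one]; norm_num
          rw [this]
          apply mul_le_mul_of_nonneg_left _ (by positivity)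
          exact Real.rpow_le_rpow_of_nonpos (modL_pos _ _) ((modL_anti hζ ht2 hs.1).trans hm2)
            (by linarith)
    _ ≤ ∫ s in (0:ℝ)..t, s ^ (2 * (0:ℝ) - 1) * modL ζ s ^ (-q) := by
        apply intervalIntegral.integral_mono_interval ht2.le htt le_rfl _ hi
        filter_upwards [ae_restrict_mem measurableSet_Ioc] with s hs
        have := modL_pos ζ s
        have := hs.1
        simp only [Pi.zero_apply]
        positivity

theorem limit_normalized_integrated_kernel (H ζ p C : ℝ) (hH0 : 0 ≤ H) (hH : H < 1/2)
    (hζ : 0 < ζ) (hp : 1 < p) (hC : 0 < C) :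
    Tendsto
      (fun t : ℝ =>
        (∫ s in (0 : ℝ)..t, logKernel H ζ p C s)
          / Real.sqrt (t * ∫ s in (0 : ℝ)..t, (logKernel H ζ p C s) ^ 2))
      (nhdsWithin 0 (Set.Ioi 0)) (nhds (Real.sqrt (2 * H) / (H + 1/2)))
    ∧ (H = 0 → Real.sqrt (2 * H) / (H + 1/2) = 0)
    ∧ (0 < H → 0 < Real.sqrt (2 * H) / (H + 1/2) ∧ Real.sqrt (2 * H) / (H + 1/2) ≤ 1) := by
  refine ⟨?_, ?_, ?_⟩
  · have hN := karamata (a := H - 1/2) (q := p) hζ (by linarith) (by linarith)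
    have hcongr := fun (t : ℝ) (ht : t ∈ Set.Ioi (0:ℝ)) =>
      (ratio_eq (H := H) (ζ := ζ) (p := p) hC ht).symm
    refine Tendsto.congr' (eventually_nhdsWithin_of_forall hcongr) ?_
    rcases hH0.eq_or_lt with h | h
    · subst h
      have hB : Tendsto (fun t : ℝ => Real.sqrt (2 ^ (-(2 * p)) * Real.log (1 / t)))
          (nhdsWithin 0 (Set.Ioi 0)) atTop :=
        Real.tendsto_sqrt_atTop.comp (log_inv_atTop.const_mul_atTop (by positivity))
      have hlim := hN.abs.div_atTop hB
      simp only [mul_zero, Real.sqrt_zero, zero_div] at hlim ⊢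
      refine squeeze_zero_norm' ?_ hlim
      filter_upwards [self_mem_nhdsWithin, Ioo_mem_nhdsGT (zero_lt_one' ℝ)] with t ht ht1
      have ht : 0 < t := ht
      have hl : 0 < Real.log (1 / t) := Real.log_pos (by rw [lt_div_iff₀ ht]; linarith [ht1.2])
      rw [norm_div, Real.norm_eq_abs, Real.norm_of_nonneg (Real.sqrt_nonneg _)]
      by_cases hi : IntervalIntegrable
          (fun s : ℝ => s ^ (2 * (0:ℝ) - 1) * modL ζ s ^ (-(2 * p))) volume 0 t
      · have := lower_zero hζ (by linarith) ht ht1.2 hi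
        simp only [mul_zero] at this
        apply div_le_div_of_nonneg_left (abs_nonneg _) (by positivity)
        exact Real.sqrt_le_sqrt this
      · have := intervalIntegral.integral_undef hi
        simp only [mul_zero] at this
        rw [this, zero_div, Real.sqrt_zero, div_zero]
        positivity
    · have hD := karamata (a := 2 * H - 1) (q := 2 * p) hζ (by linarith) (by linarith)
      have hs : Real.sqrt (1 / (2 * H - 1 + 1)) ≠ 0 := by
        rw [sub_add_cancel]; positivity
      have := hN.div hD.sqrt hs
      convert this using 2
      · rfl
      rw [sub_add_cancel, one_div (2 * H), Real.sqrt_inv, div_inv_eq_mul]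
      rw [show H - 1/2 + 1 = H + 1/2 by ring]
      ring
  · rintro rfl; simp
  · intro h
    refine ⟨by positivity, ?_⟩
    rw [div_le_one (by positivity)]
    apply Real.sqrt_le_iff.mpr
    exact ⟨by positivity, by nlinarith [sq_nonneg (H - 1/2)]⟩
end

section
/- Let H ∈ (0,1). Then ∫₁^∞ ( y^{H−1/2} − (y−1)^{H−1/2} )² dy < ∞, i.e. the function y ↦ y^{H−1/2} − (y−1)^{H−1/2} is square integrable on (1,∞). -/
open MeasureTheory

theorem square_integrable_power_difference (H : ℝ) (hH0 : 0 < H) (hH : H < 1) :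
    IntegrableOn (fun y : ℝ => (y ^ (H - 1/2) - (y - 1) ^ (H - 1/2)) ^ 2)
      (Set.Ioi (1 : ℝ)) := by
  have hmeas : Measurable (fun y : ℝ => (y ^ (H - 1/2) - (y - 1) ^ (H - 1/2)) ^ 2) := by
    fun_prop
  have hsq : ∀ x : ℝ, 0 < x → ∀ a : ℝ, (x ^ a) ^ 2 = x ^ (2 * a) := by
    intro x hx a
    rw [← Real.rpow_natCast, ← Real.rpow_mul hx.le]
    congr 1
    push_cast
    ring
  rw [← Set.Ioc_union_Ioi_eq_Ioi (show (1:ℝ) ≤ 2 by norm_num)]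
  refine IntegrableOn.union ?_ ?_
  · have h1 : IntegrableOn (fun y : ℝ => y ^ (2 * (H - 1/2))) (Set.Ioc 1 2) := by
      rw [← intervalIntegrable_iff_integrableOn_Ioc_of_le (by norm_num)]
      exact intervalIntegral.intervalIntegrable_rpow' (by linarith)
    have h2 : IntegrableOn (fun y : ℝ => (y - 1) ^ (2 * (H - 1/2))) (Set.Ioc 1 2) := by
      rw [← intervalIntegrable_iff_integrableOn_Ioc_of_le (by norm_num)]
      have := (intervalIntegral.intervalIntegrable_rpow' (a := 0) (b := 1)
        (r := 2 * (H - 1/2)) (by linarith)).comp_sub_right 1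
      norm_num at this ⊢
      exact this
    refine Integrable.mono' ((h1.const_mul 2).add (h2.const_mul 2))
      hmeas.aestronglyMeasurable ?_
    refine (ae_restrict_iff' measurableSet_Ioc).2 (Filter.Eventually.of_forall ?_)
    intro y hy
    have hy1 : 0 < y - 1 := by linarith [hy.1]
    have hy0 : 0 < y := by linarith
    simp only [Pi.add_apply]
    rw [Real.norm_of_nonneg (sq_nonneg _), ← hsq y hy0, ← hsq _ hy1]
    nlinarith [sq_nonneg (y ^ (H - 1/2) + (y - 1) ^ (H - 1/2))]
  · have h1 : IntegrableOn (fun y : ℝ => (y - 1) ^ (2 * (H - 1/2 - 1))) (Set.Ioi 2) := by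
      have h := integrableOn_Ioi_rpow_of_lt (a := 2 * (H - 1/2 - 1)) (c := 1)
        (by linarith) one_pos
      have := ((measurePreserving_sub_right volume (1:ℝ)).integrableOn_comp_preimage
        (MeasurableEquiv.subRight (1:ℝ)).measurableEmbedding).2 h
      have e : (fun x : ℝ => x - 1) ⁻¹' Set.Ioi 1 = Set.Ioi 2 := by
        ext x
        simp only [Set.mem_preimage, Set.mem_Ioi]
        constructor <;> intro h <;> linarith
      rw [e] at this
      exact this
    refine Integrable.mono' (h1.const_mul ((H - 1/2) ^ 2)) hmeas.aestronglyMeasurable ?_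
    refine (ae_restrict_iff' measurableSet_Ioi).2 (Filter.Eventually.of_forall ?_)
    intro y hy
    have hy2 : 2 < y := hy
    have hy1 : 0 < y - 1 := by linarith
    have hd : ∀ x : ℝ, 0 < x →
        HasDerivAt (fun x : ℝ => x ^ (H - 1/2)) ((H - 1/2) * x ^ (H - 1/2 - 1)) x :=
      fun x hx => Real.hasDerivAt_rpow_const (Or.inl hx.ne')
    obtain ⟨c, hc, hce⟩ := exists_hasDerivAt_eq_slope (fun x : ℝ => x ^ (H - 1/2))
      (fun x => (H - 1/2) * x ^ (H - 1/2 - 1)) (show y - 1 < y by linarith)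
      (fun x hx => (hd x (by linarith [hx.1])).continuousAt.continuousWithinAt)
      (fun x hx => hd x (by linarith [hx.1]))
    rw [sub_sub_cancel, div_one] at hce
    rw [Real.norm_of_nonneg (sq_nonneg _), ← hce, mul_pow, ← hsq _ hy1]
    have hcp : 0 < c := by linarith [hc.1]
    have := Real.rpow_le_rpow_of_nonpos hy1 hc.1.le (show H - 1/2 - 1 ≤ 0 by linarith)
    gcongr
end

section
/- Let H ∈ (0,1) and let 0 ≤ b ≤ s < t be real numbers. Then ∫₀ᵇ ( (t−r)^{H−1/2} − (s−r)^{H−1/2} )² dr = (t−s)^{2H} ∫_{(t−b)/(t−s)}^{t/(t−s)} ( y^{H−1/2} − (y−1)^{H−1/2} )² dy, and consequently ∫₀ᵇ ( (t−r)^{H−1/2} − (s−r)^{H−1/2} )² dr ≤ (t−s)^{2H} ∫₁^∞ ( y^{H−1/2} − (y−1)^{H−1/2} )² dy. -/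
open MeasureTheory

lemma aux_integrable (H : ℝ) (hH0 : 0 < H) (hH : H < 1) :
    IntegrableOn (fun y : ℝ => (y ^ (H - 1/2) - (y - 1) ^ (H - 1/2)) ^ 2) (Set.Ioi 1) := by
  have hmeas : Measurable (fun y : ℝ => (y ^ (H - 1/2) - (y - 1) ^ (H - 1/2)) ^ 2) := by
    fun_prop
  have hsq : ∀ x : ℝ, 0 ≤ x → (x ^ (H - 1/2)) ^ 2 = x ^ (2 * H - 1) := by
    intro x hx
    rw [← Real.rpow_natCast, ← Real.rpow_mul hx]
    congr 1
    push_cast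
    ring
  have hU : Set.Ioi (1 : ℝ) = Set.Ioc 1 2 ∪ Set.Ioi 2 :=
    (Set.Ioc_union_Ioi_eq_Ioi (by norm_num)).symm
  rw [hU]
  refine IntegrableOn.union ?_ ?_
  · have h1 : IntervalIntegrable (fun y : ℝ => y ^ (2 * H - 1)) volume 1 2 :=
      intervalIntegral.intervalIntegrable_rpow' (by linarith)
    have h2 : IntervalIntegrable (fun y : ℝ => (y - 1) ^ (2 * H - 1)) volume 1 2 := by
      have h := (intervalIntegral.intervalIntegrable_rpow' (a := 0) (b := 1)
        (r := 2 * H - 1) (by linarith)).comp_sub_right 1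
      norm_num at h
      exact h
    have h3 := ((h1.const_mul 2).add (h2.const_mul 2))
    rw [intervalIntegrable_iff_integrableOn_Ioc_of_le (by norm_num)] at h3
    refine Integrable.mono' h3 hmeas.aestronglyMeasurable ?_
    filter_upwards [ae_restrict_mem measurableSet_Ioc] with y hy
    have e1 := hsq y (by linarith [hy.1])
    have e2 := hsq (y - 1) (by linarith [hy.1])
    rw [Real.norm_of_nonneg (sq_nonneg _), ← e1, ← e2]
    nlinarith [sq_nonneg (y ^ (H - 1/2) + (y - 1) ^ (H - 1/2))]
  · have h1 : IntegrableOn (fun y : ℝ => y ^ (2 * H - 3)) (Set.Ioi 2) :=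
      integrableOn_Ioi_rpow_of_lt (by linarith) (by norm_num)
    have h3 := h1.const_mul ((H - 1/2) ^ 2 * (1/2 : ℝ) ^ (2 * H - 3))
    refine Integrable.mono' h3 hmeas.aestronglyMeasurable ?_
    filter_upwards [ae_restrict_mem measurableSet_Ioi] with y hy
    have hy : 2 < y := hy
    rw [Real.norm_of_nonneg (sq_nonneg _)]
    have hd : ∀ x ∈ Set.Icc (y - 1) y,
        HasDerivAt (fun x : ℝ => x ^ (H - 1/2)) ((H - 1/2) * x ^ (H - 1/2 - 1)) x := by
      intro x hx
      exact Real.hasDerivAt_rpow_const (Or.inl (by linarith [hx.1]))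
    obtain ⟨c, hc, hcs⟩ := exists_hasDerivAt_eq_slope (fun x : ℝ => x ^ (H - 1/2))
      (fun x => (H - 1/2) * x ^ (H - 1/2 - 1)) (by linarith : y - 1 < y)
      (fun x hx => (hd x hx).continuousAt.continuousWithinAt)
      (fun x hx => hd x ⟨hx.1.le, hx.2.le⟩)
    have hc1 := hc.1
    have e : y ^ (H - 1/2) - (y - 1) ^ (H - 1/2) = (H - 1/2) * c ^ (H - 1/2 - 1) := by
      rw [hcs]; simp
    have e2 : (c ^ (H - 1/2 - 1)) ^ 2 = c ^ (2 * H - 3) := by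
      rw [← Real.rpow_natCast, ← Real.rpow_mul (by linarith)]
      congr 1
      push_cast
      ring
    rw [e, mul_pow, e2, mul_assoc, ← Real.mul_rpow (by norm_num) (by linarith)]
    refine mul_le_mul_of_nonneg_left ?_ (sq_nonneg _)
    exact Real.rpow_le_rpow_of_nonpos (by linarith) (by linarith) (by linarith)

theorem power_increment_change_of_variables (H : ℝ) (hH0 : 0 < H) (hH : H < 1)
    (b s t : ℝ) (hb : 0 ≤ b) (hbs : b ≤ s) (hst : s < t) :
    (∫ r in (0 : ℝ)..b, ((t - r) ^ (H - 1/2) - (s - r) ^ (H - 1/2)) ^ 2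
        = (t - s) ^ (2 * H)
            * ∫ y in ((t - b) / (t - s))..(t / (t - s)),
                (y ^ (H - 1/2) - (y - 1) ^ (H - 1/2)) ^ 2)
    ∧ (∫ r in (0 : ℝ)..b, ((t - r) ^ (H - 1/2) - (s - r) ^ (H - 1/2)) ^ 2
        ≤ (t - s) ^ (2 * H)
            * ∫ y in Set.Ioi (1 : ℝ), (y ^ (H - 1/2) - (y - 1) ^ (H - 1/2)) ^ 2) := by
  have hc : 0 < t - s := by linarith
  have key : ∫ r in (0 : ℝ)..b, ((t - r) ^ (H - 1/2) - (s - r) ^ (H - 1/2)) ^ 2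
        = (t - s) ^ (2 * H)
            * ∫ y in ((t - b) / (t - s))..(t / (t - s)),
                (y ^ (H - 1/2) - (y - 1) ^ (H - 1/2)) ^ 2 := by
    have h := intervalIntegral.integral_comp_sub_div (a := 0) (b := b)
      (fun y : ℝ => (y ^ (H - 1/2) - (y - 1) ^ (H - 1/2)) ^ 2) hc.ne' (t / (t - s))
    rw [zero_div, sub_zero, ← sub_div, smul_eq_mul] at h
    have hp : (t - s) ^ (2 * H) = (t - s) ^ (2 * H - 1) * (t - s) := by
      rw [Real.rpow_sub_one hc.ne']
      field_simp
    rw [hp, mul_assoc, ← h, ← intervalIntegral.integral_const_mul]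
    refine intervalIntegral.integral_congr ?_
    intro r hr
    rw [Set.uIcc_of_le hb] at hr
    have hr2 := hr.2
    have e1 : t / (t - s) - r / (t - s) = (t - r) / (t - s) := by ring
    have e2 : (t - r) / (t - s) - 1 = (s - r) / (t - s) := by field_simp; ring
    have e3 : (t - s) ^ (2 * H - 1) = ((t - s) ^ (H - 1/2)) ^ 2 := by
      rw [← Real.rpow_natCast, ← Real.rpow_mul hc.le]
      congr 1
      push_cast
      ring
    have hpos : 0 < (t - s) ^ (H - 1/2) := Real.rpow_pos_of_pos hc _
    simp only
    rw [e1, e2, e3, Real.div_rpow (by linarith) hc.le, Real.div_rpow (by linarith) hc.le]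
    field_simp
  refine ⟨key, ?_⟩
  rw [key]
  refine mul_le_mul_of_nonneg_left ?_ (Real.rpow_nonneg hc.le _)
  rw [intervalIntegral.integral_of_le (by gcongr; linarith)]
  refine setIntegral_mono_set (aux_integrable H hH0 hH)
    (Filter.Eventually.of_forall fun y => sq_nonneg _) (HasSubset.Subset.eventuallyLE ?_)
  intro y hy
  have : 1 ≤ (t - b) / (t - s) := by rw [le_div_iff₀ hc]; linarith
  exact lt_of_le_of_lt this hy.1
end
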